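/- arXiv:1810.01704 — 2 statements merged into one kernel-verified Lean document; each statement's English description precedes it below -/
import Mathlib

section
/- Let H be a Heyting algebra having the Density and Splitting properties, let A and B be finite Heyting algebras, let i : A → H and j : A → B be injective Heyting-algebra homomorphisms. Then there exists an injective Heyting-algebra homomorphism k : B → H with k ∘ j = i. -/
/-- `StrongOrd b a` means `b ≫ a`, i.e. `b ⇨ a = a` and `a ≤ b`. -/
def StrongOrd {H : Type*} [HeytingAlgebra H] (b a : H) : Prop := b ⇨ a = a ∧ a ≤ b

/-- The Density property. -/
def HasDensity (H : Type*) [HeytingAlgebra H] : Prop :=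
  ∀ a c : H, StrongOrd c a → a ≠ ⊤ → ∃ b : H, b ≠ ⊤ ∧ StrongOrd c b ∧ StrongOrd b a

/-- The Splitting property. -/
def HasSplitting (H : Type*) [HeytingAlgebra H] : Prop :=
  ∀ a b₁ b₂ : H, StrongOrd (b₁ ⊓ b₂) a → a ≠ ⊤ →
    ∃ a₁ a₂ : H, a₁ ≠ ⊤ ∧ a₂ ≠ ⊤ ∧ a₂ ⇨ a = a₁ ∧ a₁ ⇨ a = a₂ ∧
      a₁ ≤ b₁ ∧ a₂ ≤ b₂ ∧ a₁ ⊔ a₂ = b₁ ⊔ b₂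

/-!
Finite Heyting algebras are handled through their meet-prime elements. The embedding `j` dualizes to
a surjection from the primes of `B` to those of `A`, along which the order of the primes of `A`
pulls back to a preorder `R` on the finite poset `Q` of primes of `B`, and `i` becomes an
`R`-indexed family in `H` that behaves like a family of primes. An embedding of `B` over `A` is the
same as a refinement of this family to one indexed by `Q` with its own order.

The preorder is shrunk to the order of `Q` one step at a time, by isolating from its equivalence
class a point `x` that is maximal among the points equivalent to some other point. The value of the
family on that class is replaced by two values: if `x` becomes incomparable with the rest of its
class they come directly from Splitting; if `x` lies above the rest, the old value is kept for the
rest, and the value at `x` comes from Splitting applied to an intermediate element given by Density.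
-/

section RelativelyDense

variable {H : Type*} [GeneralizedHeytingAlgebra H] {a b c : H}

theorem inf_himp_eq_self (hb : b ⇨ a = a) (hc : c ⇨ a = a) : b ⊓ c ⇨ a = a := by
  rw [← himp_himp, hc, hb]

theorem himp_himp_eq_self (hb : b ⇨ a = a) (c : H) : b ⇨ c ⇨ a = c ⇨ a := by
  rw [himp_left_comm, hb]

theorem himp_eq_self_of_le_sup (hb : b ⇨ a = a) (h : b ≤ c ⊔ a) : c ⇨ a = a := by
  refine le_antisymm ?_ le_himp
  calc c ⇨ a = c ⊔ a ⇨ a := by rw [sup_himp_distrib, himp_self, inf_top_eq]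
    _ ≤ b ⇨ a := himp_le_himp_right h
    _ = a := hb

end RelativelyDense

section InfOn

variable {H Q : Type*} [Finite Q] {S T : Set Q} {f : Q → H} {t : H}

/-- The meet of the values of `f` on a subset `S` of a finite type. -/
noncomputable def infOn [SemilatticeInf H] [OrderTop H] (S : Set Q) (f : Q → H) : H :=
  S.toFinite.toFinset.inf f

theorem le_infOn_iff [SemilatticeInf H] [OrderTop H] :
    t ≤ infOn S f ↔ ∀ q ∈ S, t ≤ f q := by
  simp [infOn]

theorem infOn_le [SemilatticeInf H] [OrderTop H] {q : Q} (hq : q ∈ S) : infOn S f ≤ f q :=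
  le_infOn_iff.1 le_rfl q hq

theorem infOn_anti [SemilatticeInf H] [OrderTop H] (h : S ⊆ T) : infOn T f ≤ infOn S f :=
  le_infOn_iff.2 fun _ hq => infOn_le (h hq)

theorem le_infOn_sup [DistribLattice H] [OrderTop H] {s : H} (h : ∀ q ∈ S, s ≤ f q ⊔ t) :
    s ≤ infOn S f ⊔ t := by
  simpa [infOn, Finset.inf_sup_distrib_right] using h

theorem le_infOn_sup_infOn [DistribLattice H] [OrderTop H]
    (h : ∀ p ∈ S, ∀ q ∈ T, t ≤ f p ⊔ f q) : t ≤ infOn S f ⊔ infOn T f := by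
  refine le_infOn_sup fun p hp => ?_
  rw [sup_comm]
  refine le_infOn_sup fun q hq => ?_
  rw [sup_comm]
  exact h p hp q hq

theorem infOn_himp_eq_self [GeneralizedHeytingAlgebra H] (h : ∀ q ∈ S, f q ⇨ t = t) :
    infOn S f ⇨ t = t :=
  Finset.inf_induction (p := fun b => b ⇨ t = t) top_himp
    (fun _ hb _ hc => inf_himp_eq_self hb hc) (by simpa using h)

end InfOn

section SplitPair

variable {H : Type*} [HeytingAlgebra H] {a h₁ h₂ : H}

/-- A pair of values `a₁, a₂` that may replace the value `a` of a prime family on an equivalence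
class when the class is split in two; `h₁` and `h₂` are the meets of the values strictly above
the two parts, and `a₂` is not to lie above `a₁`. -/
structure IsSplitPair (a h₁ h₂ a₁ a₂ : H) : Prop where
  inf_eq : a₁ ⊓ a₂ = a
  left_le : a₁ ≤ h₁
  right_le : a₂ ≤ h₂
  le_left_sup : h₁ ≤ a₁ ⊔ h₁ ⊓ h₂
  le_right_sup : h₂ ≤ a₂ ⊔ h₁ ⊓ h₂
  inf_himp_left : h₁ ⊓ h₂ ⇨ a₁ = a₁
  inf_himp_right : h₁ ⊓ h₂ ⇨ a₂ = a₂
  left_himp_right : a₁ ⇨ a₂ = a₂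
  left_ne_top : a₁ ≠ ⊤
  right_ne_top : a₂ ≠ ⊤

theorem HasSplitting.exists_isSplitPair (hs : HasSplitting H) (h : StrongOrd (h₁ ⊓ h₂) a)
    (ha : a ≠ ⊤) :
    ∃ a₁ a₂, IsSplitPair a h₁ h₂ a₁ a₂ ∧ a₂ ⇨ a₁ = a₁ ∧ a₁ ⊔ a₂ = h₁ ⊔ h₂ := by
  obtain ⟨a₁, a₂, ne_top₁, ne_top₂, eq₁, eq₂, le₁, le₂, hsup⟩ := hs a h₁ h₂ h ha
  have ha₁ : a ≤ a₁ := eq₁ ▸ le_himp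
  refine ⟨a₁, a₂, ⟨?_, le₁, le₂, ?_, ?_, ?_, ?_, ?_, ne_top₁, ne_top₂⟩, ?_, hsup⟩
  · rw [← eq₂, inf_himp, inf_eq_right.2 ha₁]
  · rw [sup_inf_left]
    exact le_inf le_sup_right ((le_sup_left.trans hsup.ge).trans (sup_le_sup_left le₂ _))
  · rw [sup_inf_left]
    refine le_inf ((le_sup_right.trans hsup.ge).trans ?_) le_sup_right
    exact sup_le (le₁.trans le_sup_right) le_sup_left
  · exact eq₁ ▸ himp_himp_eq_self h.1 a₂
  · exact eq₂ ▸ himp_himp_eq_self h.1 a₁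
  · rw [← eq₂, himp_himp, inf_idem]
  · rw [← eq₁, himp_himp, inf_idem]

theorem HasDensity.exists_isSplitPair (hd : HasDensity H) (hs : HasSplitting H)
    (h : StrongOrd h₂ a) (hle : h₂ ≤ h₁) (ha : a ≠ ⊤) : ∃ a₁, IsSplitPair a h₁ h₂ a₁ a := by
  have hinf : h₁ ⊓ h₂ = h₂ := inf_eq_right.2 hle
  obtain ⟨b, hb, hb₂, hba⟩ := hd a h₂ h ha
  obtain ⟨b₁, b₂, hsplit, -, -⟩ := hs.exists_isSplitPair (hinf.symm ▸ hb₂) hb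
  have hbb₁ : b ≤ b₁ := hsplit.inf_eq ▸ inf_le_left
  exact ⟨b₁,
    { inf_eq := inf_eq_right.2 (hba.2.trans hbb₁)
      left_le := hsplit.left_le
      right_le := h.2
      le_left_sup := hsplit.le_left_sup
      le_right_sup := hinf.symm ▸ le_sup_right
      inf_himp_left := hsplit.inf_himp_left
      inf_himp_right := hinf.symm ▸ h.1
      left_himp_right := himp_eq_self_of_le_sup hba.1 (hbb₁.trans le_sup_left)
      left_ne_top := hsplit.left_ne_top
      right_ne_top := ha }⟩

end SplitPair

/-- Preorders on a poset that contain its order and for which the projection to the quotient poset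
is a bounded morphism (p-morphism). The back condition goes downwards, because meet-prime elements
are compared by the order of the algebra. -/
structure IsBisimPreorder {Q : Type*} [PartialOrder Q] (R : Q → Q → Prop) : Prop where
  of_le : ∀ ⦃u v⦄, u ≤ v → R u v
  trans : ∀ ⦃u v w⦄, R u v → R v w → R u w
  back : ∀ ⦃u v⦄, R u v → ∃ w ≤ v, AntisymmRel R w u

namespace IsBisimPreorder

variable {Q : Type*} [PartialOrder Q] {R : Q → Q → Prop} {u v w : Q}

theorem refl (hR : IsBisimPreorder R) (u : Q) : R u u := hR.of_le le_rfl

theorem antisymmRel_refl (hR : IsBisimPreorder R) (u : Q) : AntisymmRel R u u :=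
  ⟨hR.refl u, hR.refl u⟩

theorem antisymmRel_trans (hR : IsBisimPreorder R) (h : AntisymmRel R u v)
    (h' : AntisymmRel R v w) : AntisymmRel R u w :=
  ⟨hR.trans h.1 h'.1, hR.trans h'.2 h.2⟩

theorem rel_congr (hR : IsBisimPreorder R) {u' v' : Q} (hu : AntisymmRel R u u')
    (hv : AntisymmRel R v v') : R u v ↔ R u' v' :=
  ⟨fun h => hR.trans hu.2 (hR.trans h hv.1), fun h => hR.trans hu.1 (hR.trans h hv.2)⟩

end IsBisimPreorder

/-- A family in `H` indexed by a preordered set that behaves like the meet-prime elements of a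
finite Heyting subalgebra of `H`: equivalent indices name the same prime, and a join of two primes,
or `⊥`, is the meet of the primes above it. -/
structure IsPrimeFamily {H Q : Type*} [HeytingAlgebra H] (R : Q → Q → Prop) (f : Q → H) : Prop where
  mono : ∀ ⦃u v⦄, R u v → f u ≤ f v
  le_sup : ∀ ⦃u v t⦄, (∀ z, R u z → R v z → t ≤ f z) → t ≤ f u ⊔ f v
  le_bot : ∀ ⦃t⦄, (∀ z, t ≤ f z) → t ≤ ⊥
  himp_eq : ∀ ⦃u v⦄, ¬ R u v → f u ⇨ f v = f v
  ne_top : ∀ u, f u ≠ ⊤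

theorem IsPrimeFamily.comp {H Q P : Type*} [HeytingAlgebra H] {R : Q → Q → Prop} {f : Q → H}
    (hf : IsPrimeFamily R f) {π : P → Q} (hπ : Function.Surjective π) :
    IsPrimeFamily (fun u v => R (π u) (π v)) (f ∘ π) where
  mono _ _ h := hf.mono h
  le_sup _ _ _ h := hf.le_sup (hπ.forall.2 h)
  le_bot _ h := hf.le_bot (hπ.forall.2 h)
  himp_eq _ _ h := hf.himp_eq h
  ne_top u := hf.ne_top (π u)

/-- `g` refines `f` along the preorder `R`: each `f u` is the meet of the values of `g` at the
points `R`-above `u`. -/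
def IsRefinement {H Q : Type*} [LE H] (R : Q → Q → Prop) (f g : Q → H) : Prop :=
  ∀ u t, t ≤ f u ↔ ∀ z, R u z → t ≤ g z

theorem IsRefinement.trans {H Q : Type*} [LE H] [PartialOrder Q] {R S : Q → Q → Prop}
    {f g k : Q → H} (hfg : IsRefinement R f g) (hR : IsBisimPreorder R) (hS : IsBisimPreorder S)
    (hSR : ∀ ⦃u v⦄, S u v → R u v) (hgk : IsRefinement S g k) : IsRefinement R f k := by
  intro u t
  rw [hfg u t]
  refine ⟨fun ht z huz => (hgk z t).1 (ht z huz) z (hS.refl z), fun ht z huz => ?_⟩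
  exact (hgk z t).2 fun z' hzz' => ht z' (hR.trans huz (hSR hzz'))

/-- `S` is obtained from `R` by removing only relations whose lower point is `R`-equivalent
to `x`. -/
structure RefinesAt {Q : Type*} (R S : Q → Q → Prop) (x : Q) : Prop where
  of_rel : ∀ ⦃u v⦄, S u v → R u v
  rel_of_not : ∀ ⦃u v⦄, ¬ AntisymmRel R u x → R u v → S u v

/-- `S` refines `R` by cutting the `R`-equivalence class of `x` into the `S`-equivalence classes of
`x` and `y`, of which the second is not above the first. -/
structure IsClusterSplit {Q : Type*} (R S : Q → Q → Prop) (x y : Q) : Prop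
    extends RefinesAt R S x where
  antisymmRel : AntisymmRel R x y
  cover : ∀ ⦃u⦄, AntisymmRel R u x → AntisymmRel S u x ∨ AntisymmRel S u y
  not_rel : ¬ S x y

section UpperInf

variable {H Q : Type*} [Finite Q] {R S : Q → Q → Prop} {f : Q → H} {u v x y : Q}

/-- The meet of the values of `f` at the points `S`-above `u` and not `R`-below it, for a preorder
`R` containing `S`. -/
noncomputable def upperInf [SemilatticeInf H] [OrderTop H] (R S : Q → Q → Prop) (f : Q → H)
    (u : Q) : H :=
  infOn {v | S u v ∧ ¬ R v u} f

theorem upperInf_le [SemilatticeInf H] [OrderTop H] (huv : S u v) (hvu : ¬ R v u) :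
    upperInf R S f u ≤ f v :=
  infOn_le ⟨huv, hvu⟩

theorem IsPrimeFamily.strongOrd_upperInf [HeytingAlgebra H] (hf : IsPrimeFamily R f) (x : Q) :
    StrongOrd (upperInf R R f x) (f x) :=
  ⟨infOn_himp_eq_self fun _ hz => hf.himp_eq hz.2, le_infOn_iff.2 fun _ hz => hf.mono hz.1⟩

variable [PartialOrder Q]

theorem upperInf_mono [SemilatticeInf H] [OrderTop H] (hR : IsBisimPreorder R)
    (hS : IsBisimPreorder S) (hRuv : R u v) (hSuv : S u v) : upperInf R S f u ≤ upperInf R S f v :=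
  infOn_anti fun _ hz => ⟨hS.trans hSuv hz.1, fun hzu => hz.2 (hR.trans hzu hRuv)⟩

theorem IsPrimeFamily.upperInf_le_sup [HeytingAlgebra H] (hf : IsPrimeFamily R f)
    (hR : IsBisimPreorder R) (hvx : ¬ R v x) : upperInf R R f x ≤ f v ⊔ f x :=
  hf.le_sup fun _ hvz hxz => upperInf_le hxz fun hzx => hvx (hR.trans hvz hzx)

theorem IsClusterSplit.upperInf_eq_inf [SemilatticeInf H] [OrderTop H] (h : IsClusterSplit R S x y)
    (hR : IsBisimPreorder R) (hS : IsBisimPreorder S) :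
    upperInf R R f x = upperInf R S f x ⊓ upperInf R S f y := by
  apply le_antisymm
  · refine le_inf (infOn_anti fun z hz => ⟨h.of_rel hz.1, hz.2⟩) (infOn_anti fun z hz => ?_)
    exact ⟨hR.trans h.antisymmRel.1 (h.of_rel hz.1), fun hzx => hz.2 (hR.trans hzx h.antisymmRel.1)⟩
  · refine le_infOn_iff.2 fun z ⟨hxz, hzx⟩ => ?_
    obtain ⟨w, hwz, hwx⟩ := hR.back hxz
    rcases h.cover hwx with hw | hw
    · exact inf_le_left.trans (upperInf_le (hS.trans hw.2 (hS.of_le hwz)) hzx)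
    · exact inf_le_right.trans (upperInf_le (hS.trans hw.2 (hS.of_le hwz))
        fun hzy => hzx (hR.trans hzy h.antisymmRel.2))

end UpperInf

/-- `g` modifies the family `f` on the `R`-equivalence class of `x` only, in such a way that it
inherits from `f` the properties of a prime family when `R` is refined to `S` at `x`. -/
structure IsClusterExtension {H Q : Type*} [HeytingAlgebra H] [Finite Q] (R S : Q → Q → Prop)
    (x : Q) (f g : Q → H) : Prop where
  eq_of_not : ∀ ⦃u⦄, ¬ AntisymmRel R u x → g u = f u
  le_iff : ∀ t, t ≤ f x ↔ ∀ u, AntisymmRel R u x → t ≤ g u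
  ne_top : ∀ ⦃u⦄, AntisymmRel R u x → g u ≠ ⊤
  le_upperInf : ∀ ⦃u⦄, AntisymmRel R u x → g u ≤ upperInf R S f u
  upperInf_le : ∀ ⦃u⦄, AntisymmRel R u x → upperInf R S f u ≤ g u ⊔ upperInf R R f x
  upperInf_himp : ∀ ⦃u⦄, AntisymmRel R u x → upperInf R R f x ⇨ g u = g u
  mono : ∀ ⦃u v⦄, AntisymmRel R u x → AntisymmRel R v x → S u v → g u ≤ g v
  himp_eq : ∀ ⦃u v⦄, AntisymmRel R u x → AntisymmRel R v x → ¬ S u v → g u ⇨ g v = g v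
  upperInf_sup_le : ∀ ⦃u v⦄, AntisymmRel R u x → AntisymmRel R v x → ¬ S u v → ¬ S v u →
    upperInf R S f u ⊔ upperInf R S f v ≤ g u ⊔ g v

namespace IsClusterExtension

variable {H Q : Type*} [HeytingAlgebra H] [Finite Q] {R S : Q → Q → Prop} {x u v : Q}
  {f g : Q → H} {t : H}

theorem le_apply (hg : IsClusterExtension R S x f g) (hu : AntisymmRel R u x) : f x ≤ g u :=
  (hg.le_iff _).1 le_rfl u hu

variable [PartialOrder Q]

theorem isRefinement (hg : IsClusterExtension R S x f g) (hR : IsBisimPreorder R)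
    (hf : IsPrimeFamily R f) : IsRefinement R f g := by
  refine fun u t => ⟨fun ht z huz => ?_, fun ht => ?_⟩
  · have htz : t ≤ f z := ht.trans (hf.mono huz)
    by_cases hz : AntisymmRel R z x
    · exact (htz.trans (hf.mono hz.1)).trans (hg.le_apply hz)
    · rwa [hg.eq_of_not hz]
  · by_cases hu : AntisymmRel R u x
    · have htx : t ≤ f x := (hg.le_iff t).2 fun z hz => ht z (hR.trans hu.1 hz.2)
      exact htx.trans (hf.mono hu.2)
    · exact hg.eq_of_not hu ▸ ht u (hR.refl u)

theorem apply_le_apply (hg : IsClusterExtension R S x f g) (hR : IsBisimPreorder R)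
    (hRS : RefinesAt R S x) (hf : IsPrimeFamily R f) (huv : S u v) : g u ≤ g v := by
  have hRuv : R u v := hRS.of_rel huv
  by_cases hu : AntisymmRel R u x
  · by_cases hv : AntisymmRel R v x
    · exact hg.mono hu hv huv
    · rw [hg.eq_of_not hv]
      refine (hg.le_upperInf hu).trans (_root_.upperInf_le huv fun hvu => hv ?_)
      exact hR.antisymmRel_trans ⟨hvu, hRuv⟩ hu
  · rw [hg.eq_of_not hu]
    exact (hg.isRefinement hR hf u _).1 le_rfl v hRuv

theorem himp_apply_eq (hg : IsClusterExtension R S x f g) (hR : IsBisimPreorder R)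
    (hS : IsBisimPreorder S) (hRS : RefinesAt R S x) (hf : IsPrimeFamily R f) (huv : ¬ S u v) :
    g u ⇨ g v = g v := by
  by_cases hu : AntisymmRel R u x <;> by_cases hv : AntisymmRel R v x
  · exact hg.himp_eq hu hv huv
  · rw [hg.eq_of_not hv]
    by_cases hxv : R x v
    · have hupper : upperInf R S f u ⇨ f v = f v := by
        refine infOn_himp_eq_self fun z ⟨huz, hzu⟩ => hf.himp_eq fun hzv => huv ?_
        exact hS.trans huz (hRS.rel_of_not (fun hz => hzu (hR.trans hz.1 hu.2)) hzv)
      have hle : upperInf R R f x ≤ f v :=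
        _root_.upperInf_le hxv fun hvx => hv ⟨hvx, hxv⟩
      exact himp_eq_self_of_le_sup hupper ((hg.upperInf_le hu).trans (sup_le_sup_left hle _))
    · exact himp_eq_self_of_le_sup (hf.himp_eq hxv) ((hg.le_apply hu).trans le_sup_left)
  · have hux : ¬ R u x := fun hux => huv (hRS.rel_of_not hu (hR.trans hux hv.2))
    rw [hg.eq_of_not hu]
    exact himp_eq_self_of_le_sup (hg.upperInf_himp hv)
      ((hf.upperInf_le_sup hR hux).trans (sup_le_sup_left (hg.le_apply hv) _))
  · rw [hg.eq_of_not hu, hg.eq_of_not hv]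
    exact hf.himp_eq fun hRuv => huv (hRS.rel_of_not hu hRuv)

theorem le_sup_of_mem_of_notMem (hg : IsClusterExtension R S x f g) (hR : IsBisimPreorder R)
    (hS : IsBisimPreorder S) (hRS : RefinesAt R S x) (hf : IsPrimeFamily R f)
    (hu : AntisymmRel R u x) (hv : ¬ AntisymmRel R v x) (hvu : ¬ S v u)
    (ht : ∀ z, S u z → S v z → t ≤ g z) : t ≤ g u ⊔ g v := by
  have hvx : ¬ R v x := fun hvx => hvu (hRS.rel_of_not hv (hR.trans hvx hu.2))
  rw [hg.eq_of_not hv]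
  have hupper : t ≤ upperInf R S f u ⊔ f v := by
    refine le_infOn_sup fun y ⟨huy, hyu⟩ => hf.le_sup fun z hyz hvz => ?_
    have hy : ¬ AntisymmRel R y x := fun hy => hyu (hR.trans hy.1 hu.2)
    have hz : ¬ AntisymmRel R z x := fun hz => hvx (hR.trans hvz hz.1)
    rw [← hg.eq_of_not hz]
    exact ht z (hS.trans huy (hRS.rel_of_not hy hyz)) (hRS.rel_of_not hv hvz)
  calc t ≤ upperInf R S f u ⊔ f v := hupper
    _ ≤ (g u ⊔ upperInf R R f x) ⊔ f v := sup_le_sup_right (hg.upperInf_le hu) _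
    _ ≤ g u ⊔ f v := by
      refine sup_le (sup_le le_sup_left ?_) le_sup_right
      exact (hf.upperInf_le_sup hR hvx).trans
        (sup_le le_sup_right ((hg.le_apply hu).trans le_sup_left))

theorem le_sup_of_mem_of_mem (hg : IsClusterExtension R S x f g) (hR : IsBisimPreorder R)
    (hS : IsBisimPreorder S) (hRS : RefinesAt R S x) (hf : IsPrimeFamily R f)
    (hu : AntisymmRel R u x) (hv : AntisymmRel R v x) (huv : ¬ S u v) (hvu : ¬ S v u)
    (ht : ∀ z, S u z → S v z → t ≤ g z) : t ≤ g u ⊔ g v := by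
  refine le_trans ?_ (hg.upperInf_sup_le hu hv huv hvu)
  refine le_infOn_sup_infOn fun y ⟨huy, hyu⟩ y' ⟨hvy', hy'v⟩ => hf.le_sup fun z hyz hy'z => ?_
  have hy : ¬ AntisymmRel R y x := fun hy => hyu (hR.trans hy.1 hu.2)
  have hy' : ¬ AntisymmRel R y' x := fun hy' => hy'v (hR.trans hy'.1 hv.2)
  have hz : ¬ AntisymmRel R z x := fun hz =>
    hyu (hR.trans hyz (hR.trans hz.1 hu.2))
  rw [← hg.eq_of_not hz]
  exact ht z (hS.trans huy (hRS.rel_of_not hy hyz)) (hS.trans hvy' (hRS.rel_of_not hy' hy'z))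

theorem le_sup_apply (hg : IsClusterExtension R S x f g) (hR : IsBisimPreorder R)
    (hS : IsBisimPreorder S) (hRS : RefinesAt R S x) (hf : IsPrimeFamily R f)
    (ht : ∀ z, S u z → S v z → t ≤ g z) : t ≤ g u ⊔ g v := by
  by_cases huv : S u v
  · exact (ht v huv (hS.refl v)).trans le_sup_right
  by_cases hvu : S v u
  · exact (ht u (hS.refl u) hvu).trans le_sup_left
  by_cases hu : AntisymmRel R u x <;> by_cases hv : AntisymmRel R v x
  · exact hg.le_sup_of_mem_of_mem hR hS hRS hf hu hv huv hvu ht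
  · exact hg.le_sup_of_mem_of_notMem hR hS hRS hf hu hv hvu ht
  · rw [sup_comm]
    exact hg.le_sup_of_mem_of_notMem hR hS hRS hf hv hu huv fun z hvz huz => ht z huz hvz
  · rw [hg.eq_of_not hu, hg.eq_of_not hv]
    refine hf.le_sup fun z huz hvz => (hg.isRefinement hR hf z t).2 fun y hzy => ?_
    exact ht y (hRS.rel_of_not hu (hR.trans huz hzy)) (hRS.rel_of_not hv (hR.trans hvz hzy))

theorem isPrimeFamily (hg : IsClusterExtension R S x f g) (hR : IsBisimPreorder R)
    (hS : IsBisimPreorder S) (hRS : RefinesAt R S x) (hf : IsPrimeFamily R f) :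
    IsPrimeFamily S g where
  mono _ _ huv := hg.apply_le_apply hR hRS hf huv
  le_sup _ _ _ ht := hg.le_sup_apply hR hS hRS hf ht
  le_bot t ht := hf.le_bot fun z => (hg.isRefinement hR hf z t).2 fun y _ => ht y
  himp_eq _ _ huv := hg.himp_apply_eq hR hS hRS hf huv
  ne_top u := by
    by_cases hu : AntisymmRel R u x
    · exact hg.ne_top hu
    · exact hg.eq_of_not hu ▸ hf.ne_top u

end IsClusterExtension

section SplitCluster

variable {H Q : Type*} {R S : Q → Q → Prop} {x y u : Q} {f : Q → H} {a₁ a₂ : H}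

open Classical in
/-- The family `f` with its value on the `R`-equivalence class of `x` replaced by `a₁` on the
`S`-equivalence class of `x` and by `a₂` on the rest. -/
noncomputable def splitCluster (R S : Q → Q → Prop) (x : Q) (f : Q → H) (a₁ a₂ : H) (u : Q) : H :=
  if AntisymmRel S u x then a₁ else if AntisymmRel R u x then a₂ else f u

theorem splitCluster_left (hu : AntisymmRel S u x) : splitCluster R S x f a₁ a₂ u = a₁ :=
  if_pos hu

theorem splitCluster_right (hu : ¬ AntisymmRel S u x) (hu' : AntisymmRel R u x) :
    splitCluster R S x f a₁ a₂ u = a₂ :=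
  (if_neg hu).trans (if_pos hu')

theorem splitCluster_of_not (hRS : RefinesAt R S x) (hu : ¬ AntisymmRel R u x) :
    splitCluster R S x f a₁ a₂ u = f u :=
  (if_neg fun h => hu ⟨hRS.of_rel h.1, hRS.of_rel h.2⟩).trans (if_neg hu)

variable [PartialOrder Q] [Finite Q]

theorem IsClusterSplit.splitCluster_cases [SemilatticeInf H] [OrderTop H]
    (h : IsClusterSplit R S x y) (hR : IsBisimPreorder R) (hS : IsBisimPreorder S) (f : Q → H)
    (a₁ a₂ : H) (hu : AntisymmRel R u x) :
    (AntisymmRel S u x ∧ splitCluster R S x f a₁ a₂ u = a₁ ∧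
      upperInf R S f u = upperInf R S f x) ∨
    (AntisymmRel S u y ∧ splitCluster R S x f a₁ a₂ u = a₂ ∧
      upperInf R S f u = upperInf R S f y) := by
  have upperInf_congr {v : Q} (huv : AntisymmRel S u v) : upperInf R S f u = upperInf R S f v :=
    le_antisymm (upperInf_mono hR hS (h.of_rel huv.1) huv.1)
      (upperInf_mono hR hS (h.of_rel huv.2) huv.2)
  rcases h.cover hu with hux | huy
  · exact Or.inl ⟨hux, splitCluster_left hux, upperInf_congr hux⟩
  · have hux : ¬ AntisymmRel S u x := fun hux => h.not_rel (hS.trans hux.2 huy.1)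
    exact Or.inr ⟨huy, splitCluster_right hux hu, upperInf_congr huy⟩

theorem IsClusterSplit.forall_splitCluster [SemilatticeInf H] [OrderTop H]
    (h : IsClusterSplit R S x y) (hR : IsBisimPreorder R) (hS : IsBisimPreorder S)
    {P : H → H → Prop} (hx : P a₁ (upperInf R S f x)) (hy : P a₂ (upperInf R S f y)) (u : Q)
    (hu : AntisymmRel R u x) :
    P (splitCluster R S x f a₁ a₂ u) (upperInf R S f u) := by
  rcases h.splitCluster_cases hR hS f a₁ a₂ hu with ⟨-, hgu, hhu⟩ | ⟨-, hgu, hhu⟩ <;> rw [hgu, hhu]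
  exacts [hx, hy]

variable [HeytingAlgebra H]

theorem IsSplitPair.isClusterExtension
    (ha : IsSplitPair (f x) (upperInf R S f x) (upperInf R S f y) a₁ a₂)
    (h : IsClusterSplit R S x y) (hR : IsBisimPreorder R) (hS : IsBisimPreorder S)
    (hle : S y x → a₂ ≤ a₁)
    (hincomp : ¬ S y x → a₂ ⇨ a₁ = a₁ ∧ a₁ ⊔ a₂ = upperInf R S f x ⊔ upperInf R S f y) :
    IsClusterExtension R S x f (splitCluster R S x f a₁ a₂) where
  eq_of_not u hu := splitCluster_of_not h.toRefinesAt hu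
  le_iff t := by
    have hyx : ¬ AntisymmRel S y x := fun hyx => h.not_rel hyx.2
    rw [← ha.inf_eq, le_inf_iff]
    refine ⟨fun ht => h.forall_splitCluster hR hS (P := fun a _ => t ≤ a) ht.1 ht.2,
      fun ht => ⟨?_, ?_⟩⟩
    · exact (ht x (hR.antisymmRel_refl x)).trans_eq (splitCluster_left (hS.antisymmRel_refl x))
    · exact (ht y h.antisymmRel.symm).trans_eq (splitCluster_right hyx h.antisymmRel.symm)
  ne_top := h.forall_splitCluster hR hS (P := fun a _ => a ≠ ⊤) ha.left_ne_top ha.right_ne_top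
  le_upperInf := h.forall_splitCluster hR hS (P := (· ≤ ·)) ha.left_le ha.right_le
  upperInf_le := by
    rw [h.upperInf_eq_inf hR hS]
    exact h.forall_splitCluster hR hS (P := fun a b => b ≤ a ⊔ _) ha.le_left_sup ha.le_right_sup
  upperInf_himp := by
    rw [h.upperInf_eq_inf hR hS]
    exact h.forall_splitCluster hR hS (P := fun a _ => _ ⇨ a = a) ha.inf_himp_left ha.inf_himp_right
  mono u v hu hv huv := by
    rcases h.splitCluster_cases hR hS f a₁ a₂ hu with ⟨hu, hgu, -⟩ | ⟨hu, hgu, -⟩ <;>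
      rcases h.splitCluster_cases hR hS f a₁ a₂ hv with ⟨hv, hgv, -⟩ | ⟨hv, hgv, -⟩ <;>
      rw [hgu, hgv] <;> rw [hS.rel_congr hu hv] at huv
    exacts [absurd huv h.not_rel, hle huv]
  himp_eq u v hu hv huv := by
    rcases h.splitCluster_cases hR hS f a₁ a₂ hu with ⟨hu, hgu, -⟩ | ⟨hu, hgu, -⟩ <;>
      rcases h.splitCluster_cases hR hS f a₁ a₂ hv with ⟨hv, hgv, -⟩ | ⟨hv, hgv, -⟩ <;>
      rw [hgu, hgv] <;> rw [hS.rel_congr hu hv] at huv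
    exacts [absurd (hS.refl x) huv, ha.left_himp_right, (hincomp huv).1, absurd (hS.refl y) huv]
  upperInf_sup_le u v hu hv huv hvu := by
    rcases h.splitCluster_cases hR hS f a₁ a₂ hu with ⟨hu, hgu, hhu⟩ | ⟨hu, hgu, hhu⟩ <;>
      rcases h.splitCluster_cases hR hS f a₁ a₂ hv with ⟨hv, hgv, hhv⟩ | ⟨hv, hgv, hhv⟩ <;>
      rw [hgu, hgv, hhu, hhv] <;> rw [hS.rel_congr hu hv] at huv <;>
      rw [hS.rel_congr hv hu] at hvu
    · exact absurd (hS.refl x) huv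
    · exact (hincomp hvu).2.ge
    · rw [sup_comm, sup_comm a₂]
      exact (hincomp huv).2.ge
    · exact absurd (hS.refl y) huv

theorem IsClusterSplit.exists_isClusterExtension (hd : HasDensity H) (hs : HasSplitting H)
    (h : IsClusterSplit R S x y) (hR : IsBisimPreorder R) (hS : IsBisimPreorder S)
    (hf : IsPrimeFamily R f) : ∃ g, IsClusterExtension R S x f g := by
  have hstrong : StrongOrd (upperInf R S f x ⊓ upperInf R S f y) (f x) :=
    h.upperInf_eq_inf (f := f) hR hS ▸ hf.strongOrd_upperInf x
  by_cases hyx : S y x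
  · have hle : upperInf R S f y ≤ upperInf R S f x := upperInf_mono hR hS h.antisymmRel.2 hyx
    rw [inf_eq_right.2 hle] at hstrong
    obtain ⟨a₁, ha₁⟩ := hd.exists_isSplitPair hs hstrong hle (hf.ne_top x)
    exact ⟨_, ha₁.isClusterExtension h hR hS (fun _ => inf_eq_right.1 ha₁.inf_eq)
      fun hyx' => absurd hyx hyx'⟩
  · obtain ⟨a₁, a₂, ha, hincomp⟩ := hs.exists_isSplitPair hstrong (hf.ne_top x)
    exact ⟨_, ha.isClusterExtension h hR hS (fun hyx' => absurd hyx' hyx) fun _ => hincomp⟩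

end SplitCluster

section Isolate

variable {Q : Type*} [PartialOrder Q] {R : Q → Q → Prop} {x y u v : Q}

/-- The preorder obtained from `R` by making `x` inequivalent to all other points and keeping the
other equivalences: `u` is below `v` if some point below `v` is still equivalent to `u`. -/
def isolate (R : Q → Q → Prop) (x u v : Q) : Prop :=
  ∃ w ≤ v, AntisymmRel R w u ∧ (w = x ↔ u = x)

theorem antisymmRel_isolate (h : AntisymmRel R u v) (hx : u = x ↔ v = x) :
    AntisymmRel (isolate R x) u v :=
  ⟨⟨v, le_rfl, h.symm, hx.symm⟩, ⟨u, le_rfl, h, hx⟩⟩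

theorem refinesAt_isolate (hR : IsBisimPreorder R) (x : Q) : RefinesAt R (isolate R x) x where
  of_rel _ _ := fun ⟨_, hwv, hwu, _⟩ => hR.trans hwu.2 (hR.of_le hwv)
  rel_of_not u v hux huv := by
    obtain ⟨w, hwv, hwu⟩ := hR.back huv
    refine ⟨w, hwv, hwu, fun hwx => absurd ?_ hux, fun hu => absurd ?_ hux⟩
    · exact hwx ▸ hwu.symm
    · exact hu ▸ hR.antisymmRel_refl u

theorem isBisimPreorder_isolate (hR : IsBisimPreorder R)
    (hx : Maximal (fun u => ∃ v ≠ u, AntisymmRel R u v) x) : IsBisimPreorder (isolate R x) where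
  of_le u v huv := ⟨u, huv, hR.antisymmRel_refl u, Iff.rfl⟩
  trans u v t := by
    rintro ⟨w, hwv, hwu, hwx⟩ ⟨s, hst, hsv, hsx⟩
    suffices hr : ∃ r ≤ s, AntisymmRel R r w ∧ (r = x ↔ w = x) by
      obtain ⟨r, hrs, hrw, hrx⟩ := hr
      exact ⟨r, hrs.trans hst, hR.antisymmRel_trans hrw hwu, hrx.trans hwx⟩
    by_cases hsv' : s = v
    · exact ⟨w, hsv' ▸ hwv, hR.antisymmRel_refl w, Iff.rfl⟩
    -- Maximality of `x`: the distinct equivalent points `s` and `v` can lie above `x` only by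
    -- being equal to it, and then `s = v`.
    have hxs : ¬ x ≤ s := fun hxs => by
      have hsx' : s = x := (hx.eq_of_le ⟨v, Ne.symm hsv', hsv⟩ hxs).symm
      exact hsv' (hsx'.trans (hsx.1 hsx').symm)
    have hxv : ¬ x ≤ v := fun hxv => by
      have hvx' : v = x := (hx.eq_of_le ⟨s, hsv', hsv.symm⟩ hxv).symm
      exact hsv' ((hsx.2 hvx').trans hvx'.symm)
    obtain ⟨r, hrs, hrw⟩ := hR.back (hR.trans (hR.of_le hwv) hsv.2)
    exact ⟨r, hrs, hrw, fun hrx => absurd (hrx ▸ hrs) hxs, fun hwx => absurd (hwx ▸ hwv) hxv⟩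
  back u v := fun ⟨w, hwv, hwu, hwx⟩ => ⟨w, hwv, antisymmRel_isolate hwu hwx⟩

theorem isClusterSplit_isolate (hR : IsBisimPreorder R)
    (hx : Maximal (fun u => ∃ v ≠ u, AntisymmRel R u v) x) (hxy : AntisymmRel R x y)
    (hyx : y ≠ x) : IsClusterSplit R (isolate R x) x y where
  toRefinesAt := refinesAt_isolate hR x
  antisymmRel := hxy
  cover u hu := by
    by_cases hux : u = x
    · exact Or.inl (antisymmRel_isolate hu (iff_of_true hux rfl))
    · exact Or.inr (antisymmRel_isolate (hR.antisymmRel_trans hu hxy) (iff_of_false hux hyx))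
  not_rel := by
    rintro ⟨w, hwy, -, hwx⟩
    have hxy' : x ≤ y := hwx.2 rfl ▸ hwy
    exact hyx (hx.eq_of_le ⟨x, hyx.symm, hxy.symm⟩ hxy').symm

theorem IsBisimPreorder.exists_isClusterSplit [Finite Q] (hR : IsBisimPreorder R)
    (hne : ¬ ∀ u v, R u v → u ≤ v) :
    ∃ S x y, IsBisimPreorder S ∧ IsClusterSplit R S x y := by
  push Not at hne
  obtain ⟨u, v, huv, hle⟩ := hne
  obtain ⟨w, hwv, hwu⟩ := hR.back huv
  have hu : ∃ v ≠ u, AntisymmRel R u v := ⟨w, fun h => hle (h ▸ hwv), hwu.symm⟩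
  obtain ⟨x, -, hx⟩ := (Set.toFinite {u | ∃ v ≠ u, AntisymmRel R u v}).exists_le_maximal hu
  obtain ⟨y, hyx, hxy⟩ := hx.prop
  exact ⟨_, x, y, isBisimPreorder_isolate hR hx, isClusterSplit_isolate hR hx hxy hyx⟩

end Isolate

theorem IsPrimeFamily.exists_refinement {H Q : Type*} [HeytingAlgebra H] [PartialOrder Q] [Finite Q]
    (hd : HasDensity H) (hs : HasSplitting H) {R : Q → Q → Prop} {f : Q → H}
    (hf : IsPrimeFamily R f) (hR : IsBisimPreorder R) :
    ∃ g : Q → H, IsPrimeFamily (· ≤ ·) g ∧ IsRefinement R f g := by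
  induction R using WellFoundedLT.induction generalizing f with
  | ind R ih =>
    by_cases hle : ∀ u v, R u v → u ≤ v
    · obtain rfl : R = (· ≤ ·) := by
        ext u v
        exact ⟨hle u v, fun h => hR.of_le h⟩
      exact ⟨f, hf, fun u t => ⟨fun ht z huz => ht.trans (hf.mono huz), fun ht => ht u le_rfl⟩⟩
    · obtain ⟨S, x, y, hS, hsplit⟩ := hR.exists_isClusterSplit hle
      obtain ⟨f', hf'⟩ := hsplit.exists_isClusterExtension hd hs hR hS hf
      have hlt : S < R :=
        lt_of_le_not_ge (fun _ _ h => hsplit.of_rel h) fun h =>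
          hsplit.not_rel (h _ _ hsplit.antisymmRel.1)
      obtain ⟨g, hg, hgf'⟩ := ih S hlt (hf'.isPrimeFamily hR hS hsplit.toRefinesAt hf) hS
      exact ⟨g, hg, (hf'.isRefinement hR hf).trans hR hS hsplit.of_rel hgf'⟩

section InfPrimes

variable {B : Type*}

theorem exists_finset_infPrime [DistribLattice B] [OrderTop B] [WellFoundedGT B] (b : B) :
    ∃ s : Finset B, s.inf id = b ∧ ∀ q ∈ s, InfPrime q := by
  simpa only [infPrime_iff_infIrred] using exists_infIrred_decomposition b

theorem le_of_forall_infPrime [DistribLattice B] [OrderTop B] [WellFoundedGT B] {b t : B}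
    (h : ∀ q, InfPrime q → b ≤ q → t ≤ q) : t ≤ b := by
  obtain ⟨s, rfl, hs⟩ := exists_finset_infPrime b
  exact Finset.le_inf fun q hq => h q (hs q hq) (Finset.inf_le hq)

theorem himp_eq_self_of_infPrime [GeneralizedHeytingAlgebra B] {b q : B} (hq : InfPrime q)
    (hb : ¬ b ≤ q) : b ⇨ q = q :=
  le_antisymm ((hq.2 himp_inf_le).resolve_right hb) le_himp

theorem exists_infPrime_le_of_himp_le [GeneralizedHeytingAlgebra B] [WellFoundedGT B] {b c q : B}
    (hq : InfPrime q) (h : b ⇨ c ≤ q) : ∃ r, InfPrime r ∧ r ≤ q ∧ c ≤ r ∧ ¬ b ≤ r := by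
  obtain ⟨s, rfl, hs⟩ := exists_finset_infPrime c
  have hinf : s.inf (b ⇨ ·) ≤ q :=
    le_trans (le_himp_iff.2 (Finset.le_inf fun r hr =>
      le_himp_iff.1 (Finset.inf_le (f := (b ⇨ ·)) hr))) h
  obtain ⟨r, hr, hrq⟩ := hq.finset_inf_le.1 hinf
  have hbr : ¬ b ≤ r := fun hbr =>
    hq.1 (isMax_iff_eq_top.2 (top_le_iff.1 (himp_eq_top_iff.2 hbr ▸ hrq)))
  exact ⟨r, hs r hr, himp_eq_self_of_infPrime (hs r hr) hbr ▸ hrq, Finset.inf_le hr, hbr⟩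

/-- The poset of meet-prime elements, with the order of the algebra. -/
abbrev InfPrimes (B : Type*) [SemilatticeInf B] : Type _ := {q : B // InfPrime q}

end InfPrimes

section InfPrimeHom

variable {B H : Type*} [HeytingAlgebra B] [Finite B] [HeytingAlgebra H] {f : InfPrimes B → H}

theorem IsPrimeFamily.infOn_himp_eq (hf : IsPrimeFamily (· ≤ ·) f) {b : B} {r : InfPrimes B}
    (hbr : ¬ b ≤ r) : infOn {q : InfPrimes B | b ≤ q} f ⇨ f r = f r :=
  infOn_himp_eq_self fun _ hq => hf.himp_eq fun hqr => hbr (le_trans hq hqr)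

theorem IsPrimeFamily.infOn_le_infOn_iff (hf : IsPrimeFamily (· ≤ ·) f) {b c : B} :
    infOn {q : InfPrimes B | b ≤ q} f ≤ infOn {q : InfPrimes B | c ≤ q} f ↔ b ≤ c := by
  refine ⟨fun h => le_of_forall_infPrime fun r hr hcr => ?_,
    fun h => infOn_anti fun _ hq => le_trans h hq⟩
  by_contra hbr
  have hle : infOn {q : InfPrimes B | b ≤ q} f ≤ f ⟨r, hr⟩ := h.trans (infOn_le hcr)
  exact hf.ne_top ⟨r, hr⟩ ((hf.infOn_himp_eq hbr).symm.trans (himp_eq_top_iff.2 hle))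

theorem IsPrimeFamily.infOn_himp (hf : IsPrimeFamily (· ≤ ·) f) (b c : B) :
    infOn {q : InfPrimes B | b ⇨ c ≤ q} f =
      infOn {q : InfPrimes B | b ≤ q} f ⇨ infOn {q : InfPrimes B | c ≤ q} f := by
  apply le_antisymm
  · refine le_himp_iff.2 (le_infOn_iff.2 fun q hcq => ?_)
    rcases q.2.2 (himp_inf_le.trans hcq : (b ⇨ c) ⊓ b ≤ q) with hq | hq
    · exact inf_le_left.trans (infOn_le hq)
    · exact inf_le_right.trans (infOn_le hq)
  · refine le_infOn_iff.2 fun q hq => ?_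
    obtain ⟨r, hr, hrq, hcr, hbr⟩ := exists_infPrime_le_of_himp_le q.2 hq
    calc infOn {q : InfPrimes B | b ≤ q} f ⇨ infOn {q : InfPrimes B | c ≤ q} f
        ≤ infOn {q : InfPrimes B | b ≤ q} f ⇨ f ⟨r, hr⟩ := himp_le_himp_left (infOn_le hcr)
      _ = f ⟨r, hr⟩ := hf.infOn_himp_eq hbr
      _ ≤ f q := hf.mono hrq

/-- The Heyting homomorphism that extends a prime family indexed by the meet-prime elements
of `B`. -/
noncomputable def infPrimeHom (f : InfPrimes B → H) (hf : IsPrimeFamily (· ≤ ·) f) :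
    HeytingHom B H where
  toFun b := infOn {q : InfPrimes B | b ≤ q} f
  map_sup' b c := by
    apply le_antisymm
    · refine le_infOn_sup_infOn fun p hp q hq => hf.le_sup fun z hpz hqz => ?_
      exact infOn_le (sup_le (le_trans hp hpz) (le_trans hq hqz))
    · exact sup_le (hf.infOn_le_infOn_iff.2 le_sup_left) (hf.infOn_le_infOn_iff.2 le_sup_right)
  map_inf' b c := by
    apply le_antisymm
    · exact le_inf (hf.infOn_le_infOn_iff.2 inf_le_left) (hf.infOn_le_infOn_iff.2 inf_le_right)
    · refine le_infOn_iff.2 fun q hq => ?_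
      rcases q.2.2 hq with hbq | hcq
      · exact inf_le_left.trans (infOn_le hbq)
      · exact inf_le_right.trans (infOn_le hcq)
  map_bot' := le_bot_iff.1 (hf.le_bot fun _ => infOn_le bot_le)
  map_himp' := hf.infOn_himp

theorem le_infPrimeHom_iff (hf : IsPrimeFamily (· ≤ ·) f) {t : H} {b : B} :
    t ≤ infPrimeHom f hf b ↔ ∀ q : InfPrimes B, b ≤ q → t ≤ f q :=
  le_infOn_iff

theorem injective_infPrimeHom (hf : IsPrimeFamily (· ≤ ·) f) :
    Function.Injective (infPrimeHom f hf) := fun _ _ h =>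
  le_antisymm (hf.infOn_le_infOn_iff.1 h.le) (hf.infOn_le_infOn_iff.1 h.ge)

end InfPrimeHom

theorem le_map_iff_forall_infPrime {F A H : Type*} [DistribLattice A] [OrderTop A]
    [WellFoundedGT A] [SemilatticeInf H] [OrderTop H] [FunLike F A H] [InfTopHomClass F A H] (i : F)
    {t : H} {a : A} : t ≤ i a ↔ ∀ p : InfPrimes A, a ≤ p → t ≤ i p := by
  refine ⟨fun ht p hap => ht.trans (OrderHomClass.mono i hap), fun ht => ?_⟩
  obtain ⟨s, rfl, hs⟩ := exists_finset_infPrime a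
  rw [map_finset_inf]
  exact Finset.le_inf fun p hp => ht ⟨p, hs p hp⟩ (Finset.inf_le hp)

theorem isPrimeFamily_map {A H : Type*} [HeytingAlgebra A] [WellFoundedGT A] [HeytingAlgebra H]
    (i : HeytingHom A H) (hi : Function.Injective i) :
    IsPrimeFamily (· ≤ ·) (fun p : InfPrimes A => i p) where
  mono _ _ h := OrderHomClass.mono i h
  le_sup u v t ht := by
    rw [← map_sup, le_map_iff_forall_infPrime]
    exact fun z hz => ht z (le_sup_left.trans hz) (le_sup_right.trans hz)
  le_bot t ht := by
    rw [← map_bot i, le_map_iff_forall_infPrime]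
    exact fun z _ => ht z
  himp_eq u v huv := by rw [← map_himp, himp_eq_self_of_infPrime v.2 huv]
  ne_top u h := u.2.1 (isMax_iff_eq_top.2 (hi (h.trans (map_top i).symm)))

section InfPrimeComap

variable {F A B : Type*} [Lattice A] [BoundedOrder A] [Finite A] [Lattice B] [BoundedOrder B]
  [FunLike F A B] [BoundedLatticeHomClass F A B] (j : F)

theorem exists_infPrime_forall_le_iff (q : InfPrimes B) :
    ∃ p : InfPrimes A, ∀ a : A, a ≤ p ↔ j a ≤ q := by
  let s : Finset A := (Set.toFinite {a | j a ≤ q}).toFinset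
  have hjs : j (s.sup id) ≤ q := by
    rw [map_finset_sup]
    exact Finset.sup_le fun a ha => by simpa [s] using ha
  have hle (a : A) : a ≤ s.sup id ↔ j a ≤ q :=
    ⟨fun h => (OrderHomClass.mono j h).trans hjs, fun h => Finset.le_sup (f := id) (by simpa [s])⟩
  refine ⟨⟨s.sup id, fun hmax => q.2.1 ?_, fun {a b} hab => ?_⟩, hle⟩
  · have htop := (hle ⊤).1 (isMax_iff_eq_top.1 hmax).ge
    rw [map_top] at htop
    exact isMax_iff_eq_top.2 (top_le_iff.1 htop)
  · rw [hle, map_inf] at hab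
    rw [hle, hle]
    exact q.2.2 hab

/-- The greatest element that `j` maps below a given meet-prime element; this is the map on
meet-prime elements dual to `j`. -/
noncomputable def infPrimeComap (q : InfPrimes B) : InfPrimes A :=
  (exists_infPrime_forall_le_iff j q).choose

theorem le_infPrimeComap_iff {a : A} {q : InfPrimes B} : a ≤ infPrimeComap j q ↔ j a ≤ q :=
  (exists_infPrime_forall_le_iff j q).choose_spec a

theorem infPrimeComap_mono {q r : InfPrimes B} (h : q ≤ r) :
    infPrimeComap j q ≤ infPrimeComap j r :=
  (le_infPrimeComap_iff j).2 (((le_infPrimeComap_iff j).1 le_rfl).trans h)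

end InfPrimeComap

section InfPrimeComapHeyting

variable {A B : Type*} [HeytingAlgebra A] [Finite A] [HeytingAlgebra B] [WellFoundedGT B]
  (j : HeytingHom A B)

theorem exists_infPrimeComap_eq_of_le {p : InfPrimes A} {q : InfPrimes B}
    (h : p ≤ infPrimeComap j q) : ∃ r ≤ q, infPrimeComap j r = p := by
  let c : A := infOn {a : A | ¬ a ≤ p} id
  have hcp : ¬ c ≤ p := fun hc => by
    obtain ⟨a, ha, hap⟩ := p.2.finset_inf_le.1 hc
    exact (Set.Finite.mem_toFinset _).1 ha hap
  have hq : j c ⇨ j p ≤ q := by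
    rw [← map_himp, himp_eq_self_of_infPrime p.2 hcp]
    exact (le_infPrimeComap_iff j).1 h
  obtain ⟨r, hr, hrq, hpr, hcr⟩ := exists_infPrime_le_of_himp_le q.2 hq
  refine ⟨⟨r, hr⟩, hrq, le_antisymm ?_ ((le_infPrimeComap_iff j).2 hpr)⟩
  by_contra hle
  exact hcr ((le_infPrimeComap_iff j (q := ⟨r, hr⟩)).1 (infOn_le hle))

theorem isBisimPreorder_infPrimeComap :
    IsBisimPreorder fun u v : InfPrimes B => infPrimeComap j u ≤ infPrimeComap j v where
  of_le _ _ h := infPrimeComap_mono j h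
  trans _ _ _ h h' := h.trans h'
  back u v h := by
    obtain ⟨r, hrv, hr⟩ := exists_infPrimeComap_eq_of_le j h
    exact ⟨r, hrv, hr.le, hr.ge⟩

theorem surjective_infPrimeComap (hj : Function.Injective j) :
    Function.Surjective (infPrimeComap j) := fun p => by
  have hp : ¬ (⊤ : B) ≤ j p := fun htop =>
    p.2.1 (isMax_iff_eq_top.2 (hj ((top_le_iff.1 htop).trans (map_top j).symm)))
  obtain ⟨q, hq, hpq⟩ : ∃ q, InfPrime q ∧ j p ≤ q := by
    by_contra! hne
    exact hp (le_of_forall_infPrime fun q hq hpq => absurd hpq (hne q hq))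
  obtain ⟨r, -, hr⟩ :=
    exists_infPrimeComap_eq_of_le j (q := ⟨q, hq⟩) ((le_infPrimeComap_iff j).2 hpq)
  exact ⟨r, hr⟩

end InfPrimeComapHeyting

/-- If `H` has the Density and Splitting properties, `A`, `B` are finite Heyting algebras,
`i : A → H` and `j : A → B` are injective Heyting homomorphisms, then `B` embeds in `H`
over `A`. -/
theorem finite_embeds_over_of_density_splitting (H : Type*) [HeytingAlgebra H]
    (hd : HasDensity H) (hs : HasSplitting H)
    (A B : Type*) [HeytingAlgebra A] [HeytingAlgebra B] [Finite A] [Finite B]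
    (i : HeytingHom A H) (hi : Function.Injective i)
    (j : HeytingHom A B) (hj : Function.Injective j) :
    ∃ k : HeytingHom B H, Function.Injective k ∧ k.comp j = i := by
  have hsurj := surjective_infPrimeComap j hj
  have hR := isBisimPreorder_infPrimeComap j
  obtain ⟨g, hg, hig⟩ := ((isPrimeFamily_map i hi).comp hsurj).exists_refinement hd hs hR
  refine ⟨infPrimeHom g hg, injective_infPrimeHom hg, HeytingHom.ext fun a =>
    eq_of_forall_le_iff fun t => ?_⟩
  calc t ≤ infPrimeHom g hg (j a)
      ↔ ∀ q : InfPrimes B, a ≤ infPrimeComap j q → t ≤ g q := by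
        simp only [le_infPrimeHom_iff, le_infPrimeComap_iff]
    _ ↔ ∀ q : InfPrimes B, a ≤ infPrimeComap j q → t ≤ i (infPrimeComap j q) :=
        ⟨fun h q haq => (hig q t).2 fun z hqz => h z (haq.trans hqz),
          fun h q haq => (hig q t).1 (h q haq) q (hR.refl q)⟩
    _ ↔ t ≤ i a := by rw [le_map_iff_forall_infPrime, hsurj.forall]
end

section
/- A countable, locally finite Heyting algebra H is existentially closed if and only if it has the Density property and the Splitting property. -/
/-- Formal Heyting terms in `n` variables. -/
inductive HeytingTerm (n : ℕ) : Type
  | var : Fin n → HeytingTerm n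
  | bot : HeytingTerm n
  | top : HeytingTerm n
  | inf : HeytingTerm n → HeytingTerm n → HeytingTerm n
  | sup : HeytingTerm n → HeytingTerm n → HeytingTerm n
  | himp : HeytingTerm n → HeytingTerm n → HeytingTerm n

namespace HeytingTerm

/-- Evaluation of a Heyting term in a Heyting algebra. -/
def eval {n : ℕ} {H : Type*} [HeytingAlgebra H] (v : Fin n → H) : HeytingTerm n → H
  | var i => v i
  | bot => ⊥
  | top => ⊤
  | inf a b => a.eval v ⊓ b.eval v
  | sup a b => a.eval v ⊔ b.eval v
  | himp a b => a.eval v ⇨ b.eval v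

/-- The degree of a Heyting term: the maximal number of nested occurrences of `⇨`. -/
def degree {n : ℕ} : HeytingTerm n → ℕ
  | var _ => 0
  | bot => 0
  | top => 0
  | inf a b => max a.degree b.degree
  | sup a b => max a.degree b.degree
  | himp a b => max a.degree b.degree + 1

end HeytingTerm

/-- `b` is a solution of the system `(t, s₁, …, s_κ)` with parameters `a`. -/
def IsSolution {l m κ : ℕ} {H : Type*} [HeytingAlgebra H]
    (t : HeytingTerm (l + m)) (s : Fin κ → HeytingTerm (l + m))
    (a : Fin l → H) (b : Fin m → H) : Prop :=
  t.eval (Fin.append a b) = ⊤ ∧ ∀ k, (s k).eval (Fin.append a b) ≠ ⊤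

/-- The system `(t, s₁, …, s_κ)` with parameters `a` has a solution in `H`. -/
def HasSolution {l m κ : ℕ} {H : Type*} [HeytingAlgebra H]
    (t : HeytingTerm (l + m)) (s : Fin κ → HeytingTerm (l + m)) (a : Fin l → H) : Prop :=
  ∃ b : Fin m → H, IsSolution t s a b

/-- A Heyting algebra is existentially closed if every system with parameters in `H`
having a solution in an extension of `H` already has a solution in `H`. -/
def IsExtClosed (H : Type*) [HeytingAlgebra H] : Prop :=
  ∀ (K : Type*) [HeytingAlgebra K] (f : HeytingHom H K), Function.Injective f →
    ∀ {l m κ : ℕ} (t : HeytingTerm (l + m)) (s : Fin κ → HeytingTerm (l + m)) (a : Fin l → H),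
      HasSolution t s (fun i => f (a i)) → HasSolution t s a

/-- A Heyting subalgebra: a subset containing `⊥`, `⊤` and closed under `⊓`, `⊔`, `⇨`. -/
structure HeytingSubalgebra (H : Type*) [HeytingAlgebra H] where
  carrier : Set H
  bot_mem : ⊥ ∈ carrier
  top_mem : ⊤ ∈ carrier
  inf_mem : ∀ {a b : H}, a ∈ carrier → b ∈ carrier → a ⊓ b ∈ carrier
  sup_mem : ∀ {a b : H}, a ∈ carrier → b ∈ carrier → a ⊔ b ∈ carrier
  himp_mem : ∀ {a b : H}, a ∈ carrier → b ∈ carrier → a ⇨ b ∈ carrier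

/-- A Heyting algebra is locally finite if every finite subset is contained in a finite
subalgebra. -/
def LocallyFiniteHA (H : Type*) [HeytingAlgebra H] : Prop :=
  ∀ s : Finset H, ∃ S : HeytingSubalgebra H, S.carrier.Finite ∧ ↑s ⊆ S.carrier

/-!
Sending an element to the prime ideals not containing it represents a Heyting algebra by lower sets
of its spectrum, and embeddings are dual to surjective p-morphisms.

Suppose Density and Splitting hold in a locally finite `H`, and a system with parameters in a finite
subalgebra `A` is solved in an extension. The implications occurring in the system have finitely
many values, and the finite distributive lattice generated by them, the solution and `A` is a finite
extension `D` of `A` in which the system is still solved. To embed `D` into `H` over `A`, lift the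
quotient map from the spectrum of `H` to that of `A` through the p-morphism dual to `A → D`. The
latter is a composition of maps collapsing a single pair of points `x ≰ y`. If `y ≰ x`, Splitting
provides the elements of `H` that separate `x` from `y`; if `y < x`, Density followed by Splitting
does.

Conversely, Density and Splitting ask for solutions of systems, which exist among the lower sets of
a frame obtained by tagging the points of the spectrum with the places where the new elements fail.
-/

open Function Set

universe u v

namespace HeytingTerm

variable {n : ℕ} {H K : Type*} [HeytingAlgebra H] [HeytingAlgebra K]

theorem eval_comp (φ : HeytingHom H K) (w : Fin n → H) (t : HeytingTerm n) :
    t.eval (φ ∘ w) = φ (t.eval w) := by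
  induction t with
  | var _ => rfl
  | bot => exact (map_bot φ).symm
  | top => exact (map_top φ).symm
  | inf _ _ ihs iht => simp only [eval, ihs, iht, map_inf]
  | sup _ _ ihs iht => simp only [eval, ihs, iht, map_sup]
  | himp _ _ ihs iht => simp only [eval, ihs, iht, map_himp]

/-- The term `(s ⇨ t) ⊓ (t ⇨ s)`, which evaluates to `⊤` exactly where `s` and `t` agree. -/
def eqv (s t : HeytingTerm n) : HeytingTerm n := (s.himp t).inf (t.himp s)

theorem eval_eqv_eq_top {w : Fin n → H} {s t : HeytingTerm n} :
    (s.eqv t).eval w = ⊤ ↔ s.eval w = t.eval w := by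
  rw [eqv, eval, eval, eval, inf_eq_top_iff, himp_eq_top_iff, himp_eq_top_iff, le_antisymm_iff]

/-- The values at `w` of the subterms of a term whose outermost symbol is `⇨`. -/
def himpValues (w : Fin n → H) : HeytingTerm n → Set H
  | var _ | bot | top => ∅
  | inf s t | sup s t => s.himpValues w ∪ t.himpValues w
  | himp s t => insert (s.eval w ⇨ t.eval w) (s.himpValues w ∪ t.himpValues w)

theorem finite_himpValues (w : Fin n → H) (t : HeytingTerm n) : (t.himpValues w).Finite := by
  induction t with
  | var _ | bot | top => exact Set.finite_empty
  | inf _ _ ihs iht | sup _ _ ihs iht => exact ihs.union iht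
  | himp _ _ ihs iht => exact (ihs.union iht).insert _

end HeytingTerm

theorem comp_finAppend {α β : Type*} {l m : ℕ} (f : α → β) (a : Fin l → α) (b : Fin m → α) :
    f ∘ Fin.append a b = Fin.append (f ∘ a) (f ∘ b) := by
  funext i
  cases i using Fin.addCases <;> simp

theorem HasSolution.map {H K : Type*} [HeytingAlgebra H] [HeytingAlgebra K] {φ : HeytingHom H K}
    (hφ : Injective φ) {l m κ : ℕ} {t : HeytingTerm (l + m)} {s : Fin κ → HeytingTerm (l + m)}
    {a : Fin l → H} : HasSolution t s a → HasSolution t s (φ ∘ a) := by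
  rintro ⟨b, ht, hs⟩
  refine ⟨φ ∘ b, ?_, fun k => ?_⟩
  · rw [← comp_finAppend, HeytingTerm.eval_comp, ht, map_top]
  · rw [← comp_finAppend, HeytingTerm.eval_comp, ← map_top φ]
    exact hφ.ne (hs k)

/-! ### Lattice embeddings between Heyting algebras -/

section LatticeEmbedding

variable {A D K F : Type*} [HeytingAlgebra A] [HeytingAlgebra D] [HeytingAlgebra K] [FunLike F D K]
  [BoundedLatticeHomClass F D K] {ι : F}

theorem map_himp_of_mem_range (hι : Injective ι) {x y : D} (h : ι x ⇨ ι y ∈ range ι) :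
    ι (x ⇨ y) = ι x ⇨ ι y := by
  obtain ⟨z, hz⟩ := h
  have le_iff {a b : D} : ι a ≤ ι b ↔ a ≤ b := by
    rw [← inf_eq_left, ← map_inf, hι.eq_iff, inf_eq_left]
  refine le_antisymm ?_ ?_
  · rw [le_himp_iff, ← map_inf, le_iff, himp_inf_self]
    exact inf_le_left
  · rw [← hz, le_iff, le_himp_iff, ← le_iff, map_inf, hz, himp_inf_self]
    exact inf_le_left

theorem HeytingTerm.eval_comp_of_himpValues_subset (hι : Injective ι) {n : ℕ} {w : Fin n → D}
    {t : HeytingTerm n} (h : t.himpValues (ι ∘ w) ⊆ range ι) :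
    t.eval (ι ∘ w) = ι (t.eval w) := by
  induction t with
  | var _ => rfl
  | bot => exact (map_bot ι).symm
  | top => exact (map_top ι).symm
  | inf _ _ ihs iht =>
    obtain ⟨hs, ht⟩ := union_subset_iff.1 h
    simp only [eval, ihs hs, iht ht, map_inf]
  | sup _ _ ihs iht =>
    obtain ⟨hs, ht⟩ := union_subset_iff.1 h
    simp only [eval, ihs hs, iht ht, map_sup]
  | himp _ _ ihs iht =>
    obtain ⟨himp_mem, hst⟩ := insert_subset_iff.1 h
    obtain ⟨hs, ht⟩ := union_subset_iff.1 hst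
    rw [ihs hs, iht ht] at himp_mem
    simp only [eval, ihs hs, iht ht, map_himp_of_mem_range hι himp_mem]

theorem IsSolution.of_comp (hι : Injective ι) {l m κ : ℕ} {t : HeytingTerm (l + m)}
    {s : Fin κ → HeytingTerm (l + m)} {a : Fin l → D} {b : Fin m → D}
    (ht : t.himpValues (Fin.append (ι ∘ a) (ι ∘ b)) ⊆ range ι)
    (hs : ∀ k, (s k).himpValues (Fin.append (ι ∘ a) (ι ∘ b)) ⊆ range ι)
    (h : IsSolution t s (ι ∘ a) (ι ∘ b)) : IsSolution t s a b := by
  obtain ⟨t_eq, s_ne⟩ := h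
  simp only [← comp_finAppend] at ht hs t_eq s_ne
  refine ⟨hι ?_, fun k s_eq => s_ne k ?_⟩
  · rw [← HeytingTerm.eval_comp_of_himpValues_subset hι ht, t_eq, map_top]
  · rw [HeytingTerm.eval_comp_of_himpValues_subset hι (hs k), s_eq, map_top]

theorem exists_heytingHom_lift (hι : Injective ι) {g : HeytingHom A K}
    (hg : range g ⊆ range ι) : ∃ j : HeytingHom A D, ⇑ι ∘ j = g := by
  choose j hj using fun a => hg (mem_range_self a)
  refine ⟨{ toFun := j, map_sup' := ?_, map_inf' := ?_, map_bot' := ?_, map_himp' := ?_ },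
    funext hj⟩
  · exact fun a b => hι (by rw [map_sup, hj, hj, hj, map_sup])
  · exact fun a b => hι (by rw [map_inf, hj, hj, hj, map_inf])
  · exact hι (by rw [hj, map_bot, map_bot])
  · intro a b
    have himp_eq : ι (j (a ⇨ b)) = ι (j a) ⇨ ι (j b) := by rw [hj, hj, hj, map_himp]
    exact hι (by rw [map_himp_of_mem_range hι ⟨_, himp_eq⟩, himp_eq])

end LatticeEmbedding

/-- Heyting implication need not be preserved: a finitely generated Heyting algebra may be infinite,
whereas a finitely generated distributive lattice is finite. -/
theorem exists_finite_boundedLatticeHom_subset_range {K : Type u} [HeytingAlgebra K] {C : Set K}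
    (hC : C.Finite) : ∃ (D : Type u) (_ : HeytingAlgebra D) (ι : BoundedLatticeHom D K),
      Finite D ∧ Injective ι ∧ C ⊆ range ι := by
  let L : Sublattice K :=
    { carrier := latticeClosure (C ∪ {⊥, ⊤})
      supClosed' := isSublattice_latticeClosure.supClosed
      infClosed' := isSublattice_latticeClosure.infClosed }
  have subset_L : C ∪ {⊥, ⊤} ⊆ L := subset_latticeClosure
  have bot_mem : ⊥ ∈ L := subset_L (by simp)
  have top_mem : ⊤ ∈ L := subset_L (by simp)
  have : Finite L := (hC.union (by simp)).latticeClosure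
  let _ : Fintype L := Fintype.ofFinite L
  let _ : BoundedOrder L := Subtype.boundedOrder bot_mem top_mem
  let _ : CompleteDistribLattice L := Fintype.toCompleteDistribLattice L
  refine ⟨L, inferInstance, ⟨⟨⟨Subtype.val, fun _ _ => rfl⟩, fun _ _ => rfl⟩, rfl, rfl⟩, this,
    Subtype.val_injective, fun c hc => ⟨⟨c, subset_L (.inl hc)⟩, rfl⟩⟩

theorem LocallyFiniteHA.exists_finite_heytingHom_subset_range {H : Type u} [HeytingAlgebra H]
    (hlf : LocallyFiniteHA H) {C : Set H} (hC : C.Finite) :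
    ∃ (A : Type u) (_ : HeytingAlgebra A) (i : HeytingHom A H),
      Finite A ∧ Injective i ∧ C ⊆ range i := by
  obtain ⟨S, hS, hCS⟩ := hlf hC.toFinset
  let _ : Max S.carrier := ⟨fun a b => ⟨a ⊔ b, S.sup_mem a.2 b.2⟩⟩
  let _ : Min S.carrier := ⟨fun a b => ⟨a ⊓ b, S.inf_mem a.2 b.2⟩⟩
  let _ : Top S.carrier := ⟨⟨⊤, S.top_mem⟩⟩
  let _ : Bot S.carrier := ⟨⟨⊥, S.bot_mem⟩⟩
  let _ : HImp S.carrier := ⟨fun a b => ⟨a ⇨ b, S.himp_mem a.2 b.2⟩⟩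
  let _ : Compl S.carrier := ⟨fun a => a ⇨ ⊥⟩
  let _ : HeytingAlgebra S.carrier := Subtype.val_injective.heytingAlgebra Subtype.val Iff.rfl
    Iff.rfl (fun _ _ => rfl) (fun _ _ => rfl) rfl rfl (fun a => himp_bot a.1) fun _ _ => rfl
  refine ⟨S.carrier, inferInstance, ⟨⟨⟨Subtype.val, fun _ _ => rfl⟩, fun _ _ => rfl⟩, rfl,
    fun _ _ => rfl⟩, hS.to_subtype, Subtype.val_injective, fun c hc => ?_⟩
  exact ⟨⟨c, hCS (hC.mem_toFinset.2 hc)⟩, rfl⟩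

/-! ### The prime spectrum -/

/-- The prime ideals of a lattice, ordered by inclusion. A prime ideal collects the elements that
fail at a point, so an element `a` corresponds to the lower set of all `I` with `a ∉ I`. -/
abbrev LatticeSpectrum (D : Type*) [Lattice D] : Type _ := {I : Order.Ideal D // I.IsPrime}

namespace LatticeSpectrum

section Lattice

variable {D : Type*} [Lattice D]

theorem coe_injective : Injective fun I : LatticeSpectrum D => (I.1 : Set D) :=
  SetLike.coe_injective.comp Subtype.val_injective

instance [Finite D] : Finite (LatticeSpectrum D) := Finite.of_injective _ coe_injective

instance [Small.{v} D] : Small.{v} (LatticeSpectrum D) := small_of_injective coe_injective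

theorem inf_mem_iff {I : LatticeSpectrum D} {a b : D} : a ⊓ b ∈ I.1 ↔ a ∈ I.1 ∨ b ∈ I.1 :=
  ⟨I.2.mem_or_mem, fun h => h.elim (I.1.lower inf_le_left) (I.1.lower inf_le_right)⟩

theorem infClosed_compl (I : LatticeSpectrum D) : InfClosed (I.1 : Set D)ᶜ :=
  fun _ ha _ hb hab => (inf_mem_iff.1 hab).elim ha hb

theorem supClosed (I : LatticeSpectrum D) : SupClosed (I.1 : Set D) :=
  fun _ ha _ hb => Order.Ideal.sup_mem ha hb

theorem top_notMem [OrderTop D] (I : LatticeSpectrum D) : ⊤ ∉ I.1 :=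
  Order.Ideal.isProper_iff_top_notMem.1 I.2.toIsProper

theorem finsetInf_mem_iff [OrderTop D] {I : LatticeSpectrum D} {ι : Type*} {s : Finset ι}
    {a : ι → D} : s.inf a ∈ I.1 ↔ ∃ i ∈ s, a i ∈ I.1 := by
  classical
  induction s using Finset.induction_on with
  | empty => simp [I.top_notMem]
  | insert _ _ _ ih => simp [Finset.inf_insert, inf_mem_iff, ih]

variable {A F : Type*} [Lattice A] [BoundedOrder A] [BoundedOrder D] [FunLike F A D]
  [BoundedLatticeHomClass F A D]

/-- The map of spectra dual to a lattice homomorphism: the preimage of a prime ideal. -/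
def comap (φ : F) (I : LatticeSpectrum D) : LatticeSpectrum A :=
  have isIdeal : Order.IsIdeal (φ ⁻¹' I.1) :=
    { IsLowerSet := fun _ _ hba ha => I.1.lower (OrderHomClass.mono φ hba) ha
      Nonempty := ⟨⊥, by simp⟩
      Directed := fun a ha b hb =>
        ⟨a ⊔ b, by simpa using ⟨ha, hb⟩, le_sup_left, le_sup_right⟩ }
  have isProper : Order.Ideal.IsProper isIdeal.toIdeal :=
    Order.Ideal.isProper_of_notMem (p := ⊤) fun h => I.top_notMem (map_top φ ▸ h)
  ⟨isIdeal.toIdeal, Order.Ideal.IsPrime.of_mem_or_mem fun {_ _} hab =>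
    inf_mem_iff.1 (by rwa [← map_inf])⟩

theorem comap_eq_of_image_subset_of_disjoint {φ : F} {I : LatticeSpectrum D}
    {J : LatticeSpectrum A} (hJ : φ '' J.1 ⊆ I.1) (hJ' : Disjoint (φ '' (J.1 : Set A)ᶜ) I.1) :
    comap φ I = J := by
  refine coe_injective (Set.ext fun a => ⟨fun ha => by_contra fun haJ => ?_, fun ha => ?_⟩)
  · exact Set.disjoint_left.1 hJ' (mem_image_of_mem φ haJ) ha
  · exact hJ (mem_image_of_mem φ ha)

end Lattice

section DistribLattice

variable {D : Type*} [DistribLattice D]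

theorem exists_subset_disjoint {S T : Set D} (hS : InfClosed S) (hT : SupClosed T)
    (hS' : S.Nonempty) (hT' : T.Nonempty) (hST : ∀ s ∈ S, ∀ t ∈ T, ¬ s ≤ t) :
    ∃ I : LatticeSpectrum D, T ⊆ I.1 ∧ Disjoint S I.1 := by
  have isPFilter : Order.IsPFilter (upperClosure S : Set D) :=
    Order.IsPFilter.of_def (hS'.mono subset_upperClosure)
      (by
        rintro a ⟨s, hs, hsa⟩ b ⟨s', hs', hsb⟩
        exact ⟨s ⊓ s', ⟨_, hS hs hs', le_rfl⟩, inf_le_left.trans hsa, inf_le_right.trans hsb⟩)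
      fun hab ha => (upperClosure S).upper hab ha
  have isIdeal : Order.IsIdeal (lowerClosure T : Set D) :=
    { IsLowerSet := (lowerClosure T).lower
      Nonempty := hT'.mono subset_lowerClosure
      Directed := by
        rintro a ⟨t, ht, hat⟩ b ⟨t', ht', hbt⟩
        exact ⟨t ⊔ t', ⟨_, hT ht ht', le_rfl⟩, hat.trans le_sup_left, hbt.trans le_sup_right⟩ }
  have disjoint : Disjoint (isPFilter.toPFilter : Set D) isIdeal.toIdeal := by
    refine Set.disjoint_left.2 ?_
    rintro a ⟨s, hs, hsa⟩ ⟨t, ht, hat⟩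
    exact hST s hs t ht (hsa.trans hat)
  obtain ⟨J, hJ, hTJ, hSJ⟩ := DistribLattice.prime_ideal_of_disjoint_filter_ideal disjoint
  exact ⟨⟨J, hJ⟩, fun t ht => hTJ (subset_lowerClosure ht), hSJ.mono_left subset_upperClosure⟩

theorem le_iff {a b : D} : a ≤ b ↔ ∀ I : LatticeSpectrum D, b ∈ I.1 → a ∈ I.1 := by
  refine ⟨fun hab I => I.1.lower hab, fun h => by_contra fun hab => ?_⟩
  obtain ⟨I, hb, ha⟩ := exists_subset_disjoint (infClosed_singleton (a := a))
    (supClosed_singleton (a := b)) (singleton_nonempty a) (singleton_nonempty b)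
    (by simpa using hab)
  exact Set.disjoint_singleton_left.1 ha (h I (hb rfl))

theorem exists_mem_of_ne_top [OrderTop D] {a : D} (ha : a ≠ ⊤) :
    ∃ I : LatticeSpectrum D, a ∈ I.1 := by
  by_contra! h
  exact ha (top_le_iff.1 (le_iff.2 fun I hI => (h I hI).elim))

theorem ne_top_of_mem [OrderTop D] {I : LatticeSpectrum D} {a : D} (ha : a ∈ I.1) : a ≠ ⊤ :=
  fun h => I.top_notMem (h ▸ ha)

end DistribLattice

section HeytingAlgebra

variable {H : Type*} [HeytingAlgebra H]

theorem exists_le_subset_disjoint {I : LatticeSpectrum H} {S T : Set H} (hS : InfClosed S)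
    (hT : SupClosed T) (hS' : S.Nonempty) (hT' : T.Nonempty)
    (hST : ∀ s ∈ S, ∀ t ∈ T, s ⇨ t ∈ I.1) :
    ∃ J ≤ I, T ⊆ J.1 ∧ Disjoint S J.1 := by
  have not_le : ∀ r ∈ image2 (· ⊓ ·) (I.1 : Set H)ᶜ S, ∀ t ∈ T, ¬ r ≤ t := by
    rintro _ ⟨c, hc, s, hs, rfl⟩ t ht hle
    exact hc (I.1.lower (le_himp_iff.2 hle) (hST s hs t ht))
  have infClosed : InfClosed (image2 (· ⊓ ·) (I.1 : Set H)ᶜ S) := by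
    rintro _ ⟨c, hc, s, hs, rfl⟩ _ ⟨c', hc', s', hs', rfl⟩
    exact ⟨c ⊓ c', infClosed_compl I hc hc', s ⊓ s', hS hs hs', inf_inf_inf_comm ..⟩
  obtain ⟨J, hTJ, hJ⟩ :=
    exists_subset_disjoint infClosed hT (.image2 ⟨⊤, I.top_notMem⟩ hS') hT' not_le
  have inf_notMem {c s : H} (hc : c ∉ I.1) (hs : s ∈ S) : c ⊓ s ∉ J.1 :=
    Set.disjoint_left.1 hJ ⟨c, hc, s, hs, rfl⟩
  obtain ⟨s, hs⟩ := hS'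
  refine ⟨J, fun c hc => by_contra fun hcI => ?_, hTJ, Set.disjoint_left.2 fun s hs hsJ => ?_⟩
  · exact inf_notMem hcI hs (inf_mem_iff.2 (.inl hc))
  · exact inf_notMem I.top_notMem hs (inf_mem_iff.2 (.inr hsJ))

theorem himp_mem_iff {I : LatticeSpectrum H} {a b : H} :
    a ⇨ b ∈ I.1 ↔ ∃ J ≤ I, a ∉ J.1 ∧ b ∈ J.1 := by
  constructor
  · intro h
    obtain ⟨J, hJI, hb, ha⟩ := exists_le_subset_disjoint (infClosed_singleton (a := a))
      (supClosed_singleton (a := b)) (singleton_nonempty a) (singleton_nonempty b)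
      (by simpa using h)
    exact ⟨J, hJI, Set.disjoint_singleton_left.1 ha, hb rfl⟩
  · rintro ⟨J, hJI, ha, hb⟩
    have inf_mem : (a ⇨ b) ⊓ a ∈ J.1 := J.1.lower himp_inf_le hb
    exact hJI ((inf_mem_iff.1 inf_mem).resolve_right ha)

theorem strongOrd_iff {a b : H} : StrongOrd b a ↔
    (∀ I : LatticeSpectrum H, a ∈ I.1 → ∃ J ≤ I, b ∉ J.1 ∧ a ∈ J.1) ∧
      ∀ I : LatticeSpectrum H, b ∈ I.1 → a ∈ I.1 := by
  rw [StrongOrd, le_antisymm_iff, and_iff_left le_himp, le_iff, le_iff]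
  simp only [himp_mem_iff]

end HeytingAlgebra

end LatticeSpectrum

/-! ### p-morphisms and algebras of lower sets -/

/-- A p-morphism (bounded morphism) of intuitionistic Kripke frames: a monotone map such that every
point below `f x` is the image of a point below `x`. Stronger states of information are smaller, to
match `LatticeSpectrum` and `LowerSet`. -/
structure IsPMorphism {X Y : Type*} [Preorder X] [Preorder Y] (f : X → Y) : Prop where
  monotone : Monotone f
  fibration : Relation.Fibration (· ≤ ·) (· ≤ ·) f

theorem mem_lowerSet_himp {X : Type*} [Preorder X] {U V : LowerSet X} {x : X} :
    x ∈ U ⇨ V ↔ ∀ z ≤ x, z ∈ U → z ∈ V := by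
  rw [← LowerSet.Iic_le, le_himp_iff]
  exact ⟨fun h z hz hU => h ⟨hz, hU⟩, fun h z hz => h z hz.1 hz.2⟩

namespace IsPMorphism

variable {X Y : Type*} [Preorder X] [Preorder Y] {f : X → Y}

theorem of_comp {Z : Type*} [Preorder Z] {g : Y → Z} (hf : IsPMorphism f) (hf' : Surjective f)
    (hgf : IsPMorphism (g ∘ f)) : IsPMorphism g := by
  constructor
  · intro y y' hyy'
    obtain ⟨x', rfl⟩ := hf' y'
    obtain ⟨x, hxx', rfl⟩ := hf.fibration hyy'
    exact hgf.monotone hxx'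
  · intro y z hz
    obtain ⟨x, rfl⟩ := hf' y
    obtain ⟨x', hx', rfl⟩ := hgf.fibration hz
    exact ⟨f x', hf.monotone hx', rfl⟩

theorem isUpperSet_kernImage (hf : IsPMorphism f) {U : Set X} (hU : IsUpperSet U) :
    IsUpperSet (kernImage f U) := by
  rintro y _ hy hyU x rfl
  obtain ⟨z, hzx, hz⟩ := hf.fibration hy
  exact hU hzx (hyU hz)

/-- The Heyting homomorphism dual to a p-morphism, sending a lower set to its preimage. -/
def preimage (hf : IsPMorphism f) : HeytingHom (LowerSet Y) (LowerSet X) where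
  toFun U := ⟨f ⁻¹' U, fun _ _ h hU => U.lower (hf.monotone h) hU⟩
  map_sup' _ _ := rfl
  map_inf' _ _ := rfl
  map_bot' := rfl
  map_himp' U V := by
    ext x
    refine Iff.trans (mem_lowerSet_himp (x := f x)) (Iff.trans ?_ mem_lowerSet_himp.symm)
    refine ⟨fun h z hz => h (f z) (hf.monotone hz), fun h y hy => ?_⟩
    obtain ⟨z, hz, rfl⟩ := hf.fibration hy
    exact h z hz

theorem preimage_injective (hf : IsPMorphism f) (hf' : Surjective f) : Injective hf.preimage :=
  fun _ _ h => SetLike.coe_injective (hf'.preimage_injective (congrArg SetLike.coe h))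

end IsPMorphism

namespace LatticeSpectrum

variable {A D : Type*} [HeytingAlgebra A] [HeytingAlgebra D]

/-- The Stone representation of a Heyting algebra by lower sets of its spectrum. -/
def stone (D : Type*) [HeytingAlgebra D] : HeytingHom D (LowerSet (LatticeSpectrum D)) where
  toFun a := ⟨{I | a ∉ I.1}, fun _ _ h ha hb => ha (h hb)⟩
  map_sup' a b := by
    ext I
    exact Order.Ideal.sup_mem_iff.not.trans not_and_or
  map_inf' a b := by
    ext I
    exact inf_mem_iff.not.trans not_or
  map_bot' := by
    ext I
    exact not_iff_false_intro I.1.bot_mem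
  map_himp' a b := by
    ext I
    refine himp_mem_iff.not.trans (Iff.trans ?_ mem_lowerSet_himp.symm)
    push Not
    rfl

theorem stone_injective : Injective (stone D) := by
  have le_of_stone_le {a b : D} (h : stone D a ≤ stone D b) : a ≤ b :=
    le_iff.2 fun _ hb => by_contra fun ha => h ha hb
  exact fun a b h => le_antisymm (le_of_stone_le h.le) (le_of_stone_le h.ge)

variable {j : HeytingHom A D}

theorem comap_surjective (hj : Injective j) : Surjective (comap j) := by
  intro J
  have not_le : ∀ s ∈ j '' (J.1 : Set A)ᶜ, ∀ t ∈ j '' (J.1 : Set A), ¬ s ≤ t := by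
    rintro _ ⟨a, ha, rfl⟩ _ ⟨b, hb, rfl⟩ hab
    have map_himp_eq_top : j (a ⇨ b) = j ⊤ := by rw [map_himp, himp_eq_top_iff.2 hab, map_top]
    exact ha (J.1.lower (himp_eq_top_iff.1 (hj map_himp_eq_top)) hb)
  obtain ⟨I, hIJ, hI⟩ := exists_subset_disjoint (J.infClosed_compl.image j) (J.supClosed.image j)
    (.image j ⟨⊤, J.top_notMem⟩) (.image j ⟨⊥, J.1.bot_mem⟩) not_le
  exact ⟨I, comap_eq_of_image_subset_of_disjoint hIJ hI⟩

theorem isPMorphism_comap (j : HeytingHom A D) : IsPMorphism (comap j) := by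
  refine ⟨fun I I' h a ha => h ha, fun I J hJI => ?_⟩
  have himp_mem : ∀ s ∈ j '' (J.1 : Set A)ᶜ, ∀ t ∈ j '' (J.1 : Set A), s ⇨ t ∈ I.1 := by
    rintro _ ⟨a, ha, rfl⟩ _ ⟨b, hb, rfl⟩
    rw [← map_himp]
    exact hJI (himp_mem_iff.2 ⟨J, le_rfl, ha, hb⟩)
  obtain ⟨I', hI'I, hI'J, hI'⟩ := exists_le_subset_disjoint (J.infClosed_compl.image j)
    (J.supClosed.image j) (.image j ⟨⊤, J.top_notMem⟩) (.image j ⟨⊥, J.1.bot_mem⟩) himp_mem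
  exact ⟨I', hI'I, comap_eq_of_image_subset_of_disjoint hI'J hI'⟩

end LatticeSpectrum

namespace IsPMorphism

variable {H Y : Type*} [HeytingAlgebra H] [Preorder Y] {p : Y → LatticeSpectrum H}

/-- The homomorphism from `H` to the lower sets of a frame over its spectrum, sending an element to
the set of points where it holds. -/
def extension (hp : IsPMorphism p) : HeytingHom H (LowerSet Y) :=
  hp.preimage.comp (LatticeSpectrum.stone H)

theorem extension_injective (hp : IsPMorphism p) (hsurj : Surjective p) :
    Injective hp.extension :=
  (hp.preimage_injective hsurj).comp LatticeSpectrum.stone_injective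

end IsPMorphism

/-! ### Collapsing a pair of points -/

/-- `κ` is a surjective p-morphism that identifies the points `x ≰ y` and nothing else. -/
structure IsPairCollapse {Q R : Type*} [PartialOrder Q] [PartialOrder R] (κ : Q → R) (x y : Q) :
    Prop extends IsPMorphism κ where
  surjective : Surjective κ
  not_le : ¬ x ≤ y
  map_eq : κ x = κ y
  eq_or_eq : ∀ ⦃u v⦄, κ u = κ v → u = v ∨ u = x ∧ v = y ∨ u = y ∧ v = x

namespace IsPairCollapse

variable {Q R : Type*} [PartialOrder Q] [PartialOrder R] {κ : Q → R} {x y u v : Q}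

theorem map_eq_map_iff (hκ : IsPairCollapse κ x y) : κ u = κ y ↔ u = x ∨ u = y := by
  refine ⟨fun h => ?_, ?_⟩
  · rcases hκ.eq_or_eq h with rfl | ⟨rfl, -⟩ | ⟨rfl, -⟩
    exacts [.inr rfl, .inl rfl, .inr rfl]
  · rintro (rfl | rfl)
    exacts [hκ.map_eq, rfl]

theorem eq_of_map_ne (hκ : IsPairCollapse κ x y) (hv : κ v ≠ κ y) (h : κ u = κ v) : u = v := by
  rcases hκ.eq_or_eq h with huv | ⟨-, rfl⟩ | ⟨-, rfl⟩
  exacts [huv, (hv rfl).elim, (hv hκ.map_eq).elim]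

theorem map_le_map_iff (hκ : IsPairCollapse κ x y) (hv : κ v ≠ κ y) : κ v ≤ κ u ↔ v ≤ u := by
  refine ⟨fun h => ?_, fun h => hκ.monotone h⟩
  obtain ⟨v', hv'u, hv'⟩ := hκ.fibration h
  exact hκ.eq_of_map_ne hv hv' ▸ hv'u

theorem map_right_le_map_iff (hκ : IsPairCollapse κ x y) : κ y ≤ κ u ↔ x ≤ u ∨ y ≤ u := by
  refine ⟨fun h => ?_, ?_⟩
  · obtain ⟨v, hvu, hv⟩ := hκ.fibration h
    rcases hκ.map_eq_map_iff.1 hv with rfl | rfl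
    exacts [.inl hvu, .inr hvu]
  · rintro (h | h)
    exacts [hκ.map_eq ▸ hκ.monotone h, hκ.monotone h]

end IsPairCollapse

/-- The points `x ≰ y` have the same strict predecessors, up to possibly `y < x`. -/
structure Collapsible {Q : Type*} [PartialOrder Q] (x y : Q) : Prop where
  not_le : ¬ x ≤ y
  le_right_of_lt : ∀ z < x, z ≤ y
  le_left_of_lt : ∀ z < y, z ≤ x

namespace Collapsible

variable {Q : Type*} [PartialOrder Q] {x y : Q}

theorem ne (h : Collapsible x y) : x ≠ y := fun hxy => h.not_le hxy.le

/-- The quotient identifying a collapsible pair, with the removed point `x` represented by `y`. The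
proof of collapsibility is an argument because the order depends on it. -/
@[ext]
structure Quotient (_ : Collapsible x y) where
  val : Q
  val_ne : val ≠ x

variable {h : Collapsible x y}

instance : PartialOrder h.Quotient where
  le u v := u.val ≤ v.val ∨ u.val = y ∧ x ≤ v.val
  le_refl u := .inl le_rfl
  le_trans := by
    rintro u v w (huv | ⟨huy, hxv⟩) (hvw | ⟨hvy, hxw⟩)
    · exact .inl (huv.trans hvw)
    · rcases (hvy ▸ huv).eq_or_lt with huy | huy
      · exact .inr ⟨huy, hxw⟩
      · exact .inl ((h.le_left_of_lt _ huy).trans hxw)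
    · exact .inr ⟨huy, hxv.trans hvw⟩
    · exact .inr ⟨huy, hxw⟩
  le_antisymm := by
    rintro u v (huv | ⟨huy, hxv⟩) (hvu | ⟨hvy, hxu⟩)
    · exact Quotient.ext (huv.antisymm hvu)
    · exact (h.not_le (hvy ▸ hxu.trans huv)).elim
    · exact (h.not_le (huy ▸ hxv.trans hvu)).elim
    · exact Quotient.ext (huy.trans hvy.symm)

instance [Finite Q] : Finite h.Quotient := Finite.of_injective Quotient.val fun _ _ => Quotient.ext

open Classical in
/-- The map sending `x` to `y` and fixing all other points. -/
noncomputable def toQuotient (h : Collapsible x y) (q : Q) : h.Quotient :=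
  if hq : q = x then ⟨y, h.ne.symm⟩ else ⟨q, hq⟩

theorem val_toQuotient_left (h : Collapsible x y) : (h.toQuotient x).val = y := by
  rw [toQuotient, dif_pos rfl]

theorem val_toQuotient (h : Collapsible x y) {q : Q} (hq : q ≠ x) : (h.toQuotient q).val = q := by
  rw [toQuotient, dif_neg hq]

theorem toQuotient_val (h : Collapsible x y) (w : h.Quotient) : h.toQuotient w.val = w :=
  Quotient.ext (h.val_toQuotient w.val_ne)

theorem le_toQuotient_iff (h : Collapsible x y) {w : h.Quotient} {q : Q} :
    w ≤ h.toQuotient q ↔ w.val ≤ q ∨ w.val = y ∧ x ≤ q := by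
  change w.val ≤ (h.toQuotient q).val ∨ w.val = y ∧ x ≤ (h.toQuotient q).val ↔ _
  by_cases hq : q = x
  · subst hq
    rw [h.val_toQuotient_left]
    constructor
    · rintro (hwy | ⟨-, hxy⟩)
      · exact hwy.eq_or_lt.symm.imp (h.le_left_of_lt _) fun hwy => ⟨hwy, le_rfl⟩
      · exact (h.not_le hxy).elim
    · rintro (hwx | ⟨hwy, -⟩)
      · exact .inl (h.le_right_of_lt _ (hwx.lt_of_ne w.val_ne))
      · exact .inl hwy.le
  · rw [h.val_toQuotient hq]

theorem isPMorphism_toQuotient (h : Collapsible x y) : IsPMorphism h.toQuotient := by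
  refine ⟨fun q r hqr => h.le_toQuotient_iff.2 ?_, fun q w hwq => ?_⟩
  · by_cases hq : q = x
    · subst hq
      exact .inr ⟨h.val_toQuotient_left, hqr⟩
    · exact .inl ((h.val_toQuotient hq).le.trans hqr)
  · rcases h.le_toQuotient_iff.1 hwq with hwq | ⟨hwy, hxq⟩
    · exact ⟨w.val, hwq, h.toQuotient_val w⟩
    · exact ⟨x, hxq, Quotient.ext (h.val_toQuotient_left.trans hwy.symm)⟩

theorem isPairCollapse_toQuotient (h : Collapsible x y) : IsPairCollapse h.toQuotient x y where
  toIsPMorphism := h.isPMorphism_toQuotient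
  surjective w := ⟨w.val, h.toQuotient_val w⟩
  not_le := h.not_le
  map_eq := Quotient.ext (by rw [h.val_toQuotient_left, h.val_toQuotient h.ne.symm])
  eq_or_eq u v huv := by
    have val_eq := congrArg Quotient.val huv
    by_cases hu : u = x <;> by_cases hv : v = x
    · exact .inl (hu.trans hv.symm)
    · rw [hu, h.val_toQuotient_left, h.val_toQuotient hv] at val_eq
      exact .inr (.inl ⟨hu, val_eq.symm⟩)
    · rw [hv, h.val_toQuotient_left, h.val_toQuotient hu] at val_eq
      exact .inr (.inr ⟨val_eq, hv⟩)
    · rw [h.val_toQuotient hu, h.val_toQuotient hv] at val_eq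
      exact .inl val_eq

end Collapsible

/-- Take `y` minimal among the points that share their image with another point, and then `x`
minimal among the other points with the same image as `y`. -/
theorem IsPMorphism.exists_collapsible {Q P : Type*} [PartialOrder Q] [Finite Q] [Preorder P]
    {π : Q → P} (hπ : IsPMorphism π) (hinj : ¬ Injective π) :
    ∃ x y, Collapsible x y ∧ π x = π y := by
  obtain ⟨a, b, hab, hne⟩ : ∃ a b, π a = π b ∧ a ≠ b := by simpa [Injective] using hinj
  obtain ⟨y, ⟨x₀, hx₀, hx₀y⟩, y_min⟩ :=
    (toFinite {y | ∃ x, x ≠ y ∧ π x = π y}).exists_minimal ⟨b, a, hne, hab⟩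
  obtain ⟨x, ⟨hxy, hπxy⟩, x_min⟩ :=
    (toFinite {x | x ≠ y ∧ π x = π y}).exists_minimal ⟨x₀, hx₀, hx₀y⟩
  refine ⟨x, y, ⟨fun hle => ?_, fun z hzx => ?_, fun z hzy => ?_⟩, hπxy⟩
  · exact hxy (hle.antisymm (y_min ⟨y, hxy.symm, hπxy.symm⟩ hle))
  · obtain ⟨y', hy'y, hπy'⟩ := hπ.fibration (hπxy ▸ hπ.monotone hzx.le)
    by_contra hzy
    have hzy' : z ≠ y' := fun hzy' => hzy (hzy'.le.trans hy'y)
    have y'_eq : y' = y := hy'y.antisymm (y_min ⟨z, hzy', hπy'.symm⟩ hy'y)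
    subst y'_eq
    exact hzx.not_ge (x_min ⟨hzy', hπy'.symm⟩ hzx.le)
  · obtain ⟨x', hx'x, hπx'⟩ := hπ.fibration (hπxy.symm ▸ hπ.monotone hzy.le)
    by_contra hzx
    have hx'z : x' ≠ z := fun hx'z => hzx (hx'z.ge.trans hx'x)
    exact hzy.not_ge (y_min ⟨x', hx'z, hπx'⟩ hzy.le)

theorem IsPMorphism.exists_isPairCollapse_comp_eq {Q : Type u} {P : Type v} [PartialOrder Q]
    [Finite Q] [Preorder P] {π : Q → P} (hπ : IsPMorphism π) (hinj : ¬ Injective π) :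
    ∃ (R : Type u) (_ : PartialOrder R) (κ : Q → R) (x y : Q) (ρ : R → P),
      Finite R ∧ IsPairCollapse κ x y ∧ IsPMorphism ρ ∧ ρ ∘ κ = π := by
  obtain ⟨x, y, h, hxy⟩ := hπ.exists_collapsible hinj
  have hκ := h.isPairCollapse_toQuotient
  have comp_eq : (fun w : h.Quotient => π w.val) ∘ h.toQuotient = π := by
    funext q
    by_cases hq : q = x
    · rw [comp_apply, hq, h.val_toQuotient_left, hxy]
    · rw [comp_apply, h.val_toQuotient hq]
  exact ⟨h.Quotient, inferInstance, h.toQuotient, x, y, fun w => π w.val, inferInstance, hκ,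
    hκ.toIsPMorphism.of_comp hκ.surjective (comp_eq.symm ▸ hπ), comp_eq⟩

/-! ### Definable quotients of the spectrum -/

section Defines

variable {H Q : Type*} [HeytingAlgebra H]

/-- The element `a` defines `U` over `f`: it fails exactly at the points that `f` maps into `U`. -/
def Defines (f : LatticeSpectrum H → Q) (a : H) (U : Set Q) : Prop := ∀ I, a ∈ I.1 ↔ f I ∈ U

variable {f : LatticeSpectrum H → Q} {a b : H} {U V : Set Q}

theorem Defines.le (ha : Defines f a U) (hb : Defines f b V) (hVU : V ⊆ U) : a ≤ b :=
  LatticeSpectrum.le_iff.2 fun I hbI => (ha I).2 (hVU ((hb I).1 hbI))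

theorem Defines.unique (ha : Defines f a U) (hb : Defines f b U) : a = b :=
  le_antisymm (ha.le hb Subset.rfl) (hb.le ha Subset.rfl)

theorem Defines.inf (ha : Defines f a U) (hb : Defines f b V) : Defines f (a ⊓ b) (U ∪ V) :=
  fun I => LatticeSpectrum.inf_mem_iff.trans (or_congr (ha I) (hb I))

theorem Defines.ne_top (ha : Defines f a U) (hf : Surjective f) (hU : U.Nonempty) : a ≠ ⊤ := by
  obtain ⟨q, hq⟩ := hU
  obtain ⟨I, rfl⟩ := hf q
  exact LatticeSpectrum.ne_top_of_mem ((ha I).2 hq)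

end Defines

/-- A quotient frame of the spectrum of `H` whose principal upper sets are defined by elements of
`H`. The finite ones are dual to the finite subalgebras of `H`. -/
structure IsDefinableQuotient {H Q : Type*} [HeytingAlgebra H] [Preorder Q]
    (f : LatticeSpectrum H → Q) : Prop extends IsPMorphism f where
  surjective : Surjective f
  exists_defines_Ici : ∀ q, ∃ a, Defines f a (Ici q)

namespace IsDefinableQuotient

variable {H Q : Type*} [HeytingAlgebra H] [Preorder Q] {f : LatticeSpectrum H → Q}

theorem of_fibration (hf : Relation.Fibration (· ≤ ·) (· ≤ ·) f) (hsurj : Surjective f)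
    (hdef : ∀ q, ∃ a, Defines f a (Ici q)) : IsDefinableQuotient f where
  monotone I J hIJ := by
    obtain ⟨a, ha⟩ := hdef (f I)
    exact (ha J).1 (hIJ ((ha I).2 le_rfl))
  fibration := hf
  surjective := hsurj
  exists_defines_Ici := hdef

theorem exists_defines [Finite Q] (hf : IsDefinableQuotient f) {U : Set Q} (hU : IsUpperSet U) :
    ∃ a, Defines f a U := by
  choose a ha using hf.exists_defines_Ici
  refine ⟨(toFinite U).toFinset.inf a, fun I => ?_⟩
  rw [LatticeSpectrum.finsetInf_mem_iff]
  constructor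
  · rintro ⟨q, hq, hqI⟩
    exact hU ((ha q I).1 hqI) ((Finite.mem_toFinset _).1 hq)
  · exact fun hI => ⟨f I, (Finite.mem_toFinset _).2 hI, (ha (f I) I).2 le_rfl⟩

theorem strongOrd (hf : IsDefinableQuotient f) {q : Q} {a b : H} (ha : Defines f a (Ici q))
    (hb : Defines f b (Ioi q)) : StrongOrd b a := by
  refine LatticeSpectrum.strongOrd_iff.2 ⟨fun I haI => ?_, fun I hbI => ?_⟩
  · obtain ⟨J, hJI, rfl⟩ := hf.fibration ((ha I).1 haI)
    exact ⟨J, hJI, fun hbJ => lt_irrefl _ ((hb J).1 hbJ), (ha J).2 le_rfl⟩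
  · exact (ha I).2 (mem_Ioi.1 ((hb I).1 hbI)).le

theorem orderIso_comp {P : Type*} [Preorder P] (hf : IsDefinableQuotient f) (e : Q ≃o P) :
    IsDefinableQuotient (e ∘ f) := by
  refine of_fibration (fun I p hp => ?_) (e.surjective.comp hf.surjective) fun p => ?_
  · obtain ⟨J, hJI, hJ⟩ := hf.fibration (e.symm_apply_le.2 hp)
    exact ⟨J, hJI, e.symm_apply_eq.1 hJ.symm |>.symm⟩
  · obtain ⟨a, ha⟩ := hf.exists_defines_Ici (e.symm p)
    exact ⟨a, fun I => (ha I).trans e.symm_apply_le⟩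

theorem exists_comap_eq {D : Type*} [HeytingAlgebra D] [Finite D]
    {f : LatticeSpectrum H → LatticeSpectrum D} (hf : IsDefinableQuotient f) :
    ∃ φ : HeytingHom D H, Injective φ ∧ LatticeSpectrum.comap φ = f := by
  have range_subset : range hf.extension ⊆ range (LatticeSpectrum.stone H) := by
    rintro _ ⟨d, rfl⟩
    obtain ⟨a, ha⟩ := hf.exists_defines (U := {J | d ∈ J.1}) fun _ _ h hd => h hd
    exact ⟨a, LowerSet.ext (Set.ext fun I => (ha I).not)⟩
  obtain ⟨φ, hφ⟩ := exists_heytingHom_lift LatticeSpectrum.stone_injective range_subset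
  refine ⟨φ, Injective.of_comp (hφ ▸ hf.extension_injective hf.surjective), funext fun I => ?_⟩
  refine LatticeSpectrum.coe_injective (Set.ext fun d => not_iff_not.1 ?_)
  exact Set.ext_iff.1 (congrArg SetLike.coe (congrFun hφ d)) I

end IsDefinableQuotient

theorem isDefinableQuotient_comap {A H : Type*} [HeytingAlgebra A] [Finite A] [HeytingAlgebra H]
    {i : HeytingHom A H} (hi : Injective i) : IsDefinableQuotient (LatticeSpectrum.comap i) where
  toIsPMorphism := LatticeSpectrum.isPMorphism_comap i
  surjective := LatticeSpectrum.comap_surjective hi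
  exists_defines_Ici J := by
    refine ⟨(toFinite (J.1 : Set A)).toFinset.sup i, fun I => ?_⟩
    rw [Order.Ideal.finsetSup_mem_iff]
    simp only [Finite.mem_toFinset]
    rfl

/-! ### Lifting a definable quotient through a pair collapse -/

/-- The equations and inequalities that Density and Splitting provide for a pair `a`, `b` of
elements. In the application a quotient identifies `x` and `y`; `m` and `m'` define the points above
and strictly above their common image, `c` and `d` the points all of whose preimages are above `x`,
respectively `y`. -/
structure IsSplittingPair {H : Type*} [HeytingAlgebra H] (m m' c d a b : H) : Prop where
  left_ne_top : a ≠ ⊤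
  right_ne_top : b ≠ ⊤
  le_left : m ≤ a
  left_himp : a ⇨ m = b
  himp_left : m' ⇨ a = a
  left_le : a ≤ c
  right_le : b ≤ d
  le_left_sup : c ≤ a ⊔ m'
  le_sup : d ≤ a ⊔ b

theorem himp_himp_eq_of_himp_eq {α : Type*} [GeneralizedHeytingAlgebra α] {a b c : α}
    (h : a ⇨ c = c) : a ⇨ b ⇨ c = b ⇨ c := by
  rw [himp_left_comm, h]

section SplittingPair

variable {H : Type*} [HeytingAlgebra H] {m m' c d : H}

theorem HasSplitting.exists_isSplittingPair (hS : HasSplitting H) (hcd : StrongOrd (c ⊓ d) m)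
    (hm : m ≠ ⊤) : ∃ a b, IsSplittingPair m (c ⊓ d) c d a b := by
  obtain ⟨a, b, ha, hb, hba, hab, hac, hbd, hsup⟩ := hS m c d hcd hm
  refine ⟨a, b, ha, hb, hba ▸ le_himp, hab, ?_, hac, hbd, ?_, le_sup_right.trans hsup.ge⟩
  · rw [← hba, himp_himp_eq_of_himp_eq hcd.1]
  · calc c ≤ c ⊓ (a ⊔ b) := le_inf le_rfl (le_sup_left.trans hsup.ge)
      _ = c ⊓ a ⊔ c ⊓ b := inf_sup_left ..
      _ ≤ a ⊔ c ⊓ d := sup_le_sup inf_le_right (inf_le_inf_left c hbd)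

theorem HasSplitting.exists_isSplittingPair_self (hS : HasSplitting H) (hD : HasDensity H)
    (hm'm : StrongOrd m' m) (hm : m ≠ ⊤) (hm'c : m' ≤ c) :
    ∃ a, IsSplittingPair m m' c m a m := by
  obtain ⟨e, he, hm'e, hem⟩ := hD m m' hm'm hm
  obtain ⟨a, b, ha, -, hba, -, hac, hbm', hsup⟩ :=
    hS e c m' (by rwa [inf_eq_right.2 hm'c]) he
  have hea : e ≤ a := hba ▸ le_himp
  refine ⟨a, ha, hm, hem.2.trans hea, le_antisymm ?_ le_himp, ?_, hac, le_rfl, ?_, le_sup_right⟩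
  · exact (himp_le_himp_right hea).trans hem.1.le
  · rw [← hba, himp_himp_eq_of_himp_eq hm'e.1]
  · exact le_sup_left.trans (hsup.ge.trans (sup_le_sup_left hbm' a))

end SplittingPair

namespace IsPairCollapse

variable {Q R : Type*} [PartialOrder Q] [PartialOrder R] {κ : Q → R} {x y q : Q}

theorem mem_kernImage_iff_of_ne (hκ : IsPairCollapse κ x y) (hq : κ q ≠ κ y) {U : Set Q} :
    κ q ∈ kernImage κ U ↔ q ∈ U :=
  ⟨fun h => h rfl, fun h _ hp => hκ.eq_of_map_ne hq hp ▸ h⟩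

theorem map_mem_kernImage_Ici_right_iff (hκ : IsPairCollapse κ x y) :
    κ y ∈ kernImage κ (Ici y) ↔ y ≤ x := by
  refine ⟨fun h => h hκ.map_eq, fun hyx q hq => ?_⟩
  rcases hκ.map_eq_map_iff.1 hq with rfl | rfl
  exacts [hyx, le_rfl]

theorem kernImage_Ici_left_subset (hκ : IsPairCollapse κ x y) :
    kernImage κ (Ici x) ⊆ Ioi (κ y) := by
  intro r hr
  obtain ⟨q, rfl⟩ := hκ.surjective r
  refine lt_of_le_of_ne (hκ.map_right_le_map_iff.2 (.inl (hr rfl))) fun hq => ?_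
  exact hκ.not_le (hr hq)

theorem Ioi_subset_kernImage_union (hκ : IsPairCollapse κ x y) :
    Ioi (κ y) ⊆ kernImage κ (Ici x) ∪ kernImage κ (Ici y) := by
  intro r hr
  obtain ⟨q, rfl⟩ := hκ.surjective r
  rw [mem_union, hκ.mem_kernImage_iff_of_ne hr.ne', hκ.mem_kernImage_iff_of_ne hr.ne']
  exact hκ.map_right_le_map_iff.1 (mem_Ioi.1 hr).le

theorem kernImage_union_eq_Ioi (hκ : IsPairCollapse κ x y) (hyx : ¬ y ≤ x) :
    kernImage κ (Ici x) ∪ kernImage κ (Ici y) = Ioi (κ y) := by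
  refine Subset.antisymm (union_subset hκ.kernImage_Ici_left_subset fun r hr => ?_)
    hκ.Ioi_subset_kernImage_union
  obtain ⟨q, rfl⟩ := hκ.surjective r
  refine lt_of_le_of_ne (hκ.monotone (hr rfl)) fun hq => ?_
  exact hyx (hr (hκ.map_eq.trans hq))

theorem kernImage_Ici_right_eq_Ici (hκ : IsPairCollapse κ x y) (hyx : y ≤ x) :
    kernImage κ (Ici y) = Ici (κ y) := by
  ext r
  obtain ⟨q, rfl⟩ := hκ.surjective r
  refine ⟨fun h => hκ.monotone (h rfl), fun h p hp => ?_⟩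
  exact (hκ.map_right_le_map_iff.1 (hp ▸ h)).elim hyx.trans id

end IsPairCollapse

/-- `a` and `b` can define the points above `x` and above `y` over a lift of `f` through `κ`. -/
structure IsLiftingPair {H Q R : Type*} [HeytingAlgebra H] [PartialOrder Q] [PartialOrder R]
    (f : LatticeSpectrum H → R) (κ : Q → R) (x y : Q) (a b : H) : Prop where
  left_ne_top : a ≠ ⊤
  right_ne_top : b ≠ ⊤
  exists_preimage : ∀ I, ∃ q, κ q = f I ∧ (a ∈ I.1 ↔ x ≤ q) ∧ (b ∈ I.1 ↔ y ≤ q)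
  exists_le_of_left_mem : ∀ I, a ∈ I.1 → ∃ J ≤ I, f J = κ y ∧ a ∈ J.1
  exists_le_of_right_mem : ∀ I, b ∈ I.1 → ∃ J ≤ I, f J = κ y ∧ a ∉ J.1

section LiftingPair

variable {H Q R : Type*} [HeytingAlgebra H] [PartialOrder Q] [PartialOrder R] {κ : Q → R}
  {f : LatticeSpectrum H → R} {x y : Q}

namespace IsSplittingPair

variable {m m' c d a b : H} {I : LatticeSpectrum H}

theorem right_mem_iff_of_left_mem (hp : IsSplittingPair m m' c d a b) (ha : a ∈ I.1) :
    b ∈ I.1 ↔ d ∈ I.1 :=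
  ⟨fun hb => I.1.lower hp.le_sup (Order.Ideal.sup_mem ha hb), I.1.lower hp.right_le⟩

theorem left_mem_iff_of_mem (hp : IsSplittingPair m m' c d a b) (hm' : m' ∈ I.1) :
    a ∈ I.1 ↔ c ∈ I.1 :=
  ⟨fun ha => I.1.lower hp.le_left_sup (Order.Ideal.sup_mem ha hm'), I.1.lower hp.left_le⟩

theorem right_mem_of_left_notMem (hp : IsSplittingPair m m' c d a b) (hm : m ∈ I.1)
    (ha : a ∉ I.1) : b ∈ I.1 :=
  hp.left_himp ▸ LatticeSpectrum.himp_mem_iff.2 ⟨I, le_rfl, ha, hm⟩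

theorem exists_preimage (hp : IsSplittingPair m m' c d a b) (hκ : IsPairCollapse κ x y)
    (hm : Defines f m (Ici (κ y))) (hm' : Defines f m' (Ioi (κ y)))
    (hc : Defines f c (kernImage κ (Ici x))) (hd : Defines f d (kernImage κ (Ici y)))
    (I : LatticeSpectrum H) : ∃ q, κ q = f I ∧ (a ∈ I.1 ↔ x ≤ q) ∧ (b ∈ I.1 ↔ y ≤ q) := by
  by_cases hI : f I = κ y
  · by_cases ha : a ∈ I.1
    · refine ⟨x, hκ.map_eq.trans hI.symm, iff_of_true ha le_rfl, ?_⟩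
      rw [hp.right_mem_iff_of_left_mem ha, hd I, hI, hκ.map_mem_kernImage_Ici_right_iff]
    · refine ⟨y, hI.symm, iff_of_false ha hκ.not_le, iff_of_true ?_ le_rfl⟩
      exact hp.right_mem_of_left_notMem ((hm I).2 hI.ge) ha
  · have m'_mem (h : m ∈ I.1) : m' ∈ I.1 := (hm' I).2 (((hm I).1 h).lt_of_ne' hI)
    have left_mem_iff : a ∈ I.1 ↔ c ∈ I.1 :=
      ⟨fun ha => (hp.left_mem_iff_of_mem (m'_mem (I.1.lower hp.le_left ha))).1 ha,
        I.1.lower hp.left_le⟩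
    have right_mem_iff : b ∈ I.1 ↔ d ∈ I.1 := by
      refine ⟨fun hb => ?_, I.1.lower hp.right_le⟩
      have m_mem : m ∈ I.1 := I.1.lower (hp.left_himp ▸ le_himp) hb
      rcases hκ.Ioi_subset_kernImage_union ((hm' I).1 (m'_mem m_mem)) with hcI | hdI
      · exact (hp.right_mem_iff_of_left_mem (left_mem_iff.2 ((hc I).2 hcI))).1 hb
      · exact (hd I).2 hdI
    obtain ⟨q, hq⟩ := hκ.surjective (f I)
    rw [left_mem_iff, right_mem_iff, hc I, hd I, ← hq]
    rw [← hq] at hI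
    exact ⟨q, rfl, hκ.mem_kernImage_iff_of_ne hI, hκ.mem_kernImage_iff_of_ne hI⟩

theorem isLiftingPair (hp : IsSplittingPair m m' c d a b) (hκ : IsPairCollapse κ x y)
    (hf : IsPMorphism f) (hm : Defines f m (Ici (κ y))) (hm' : Defines f m' (Ioi (κ y)))
    (hc : Defines f c (kernImage κ (Ici x))) (hd : Defines f d (kernImage κ (Ici y))) :
    IsLiftingPair f κ x y a b where
  left_ne_top := hp.left_ne_top
  right_ne_top := hp.right_ne_top
  exists_preimage := hp.exists_preimage hκ hm hm' hc hd
  exists_le_of_left_mem I ha := by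
    obtain ⟨J, hJI, hm'J, haJ⟩ := LatticeSpectrum.himp_mem_iff.1 (hp.himp_left.symm ▸ ha)
    have hJ : κ y ≤ f J := (hm J).1 (J.1.lower hp.le_left haJ)
    exact ⟨J, hJI, (hJ.eq_of_not_lt fun hlt => hm'J ((hm' J).2 hlt)).symm, haJ⟩
  exists_le_of_right_mem I hb := by
    obtain ⟨J, hJI, haJ, hmJ⟩ := LatticeSpectrum.himp_mem_iff.1 (hp.left_himp.symm ▸ hb)
    obtain ⟨J', hJ'J, hJ'⟩ := hf.fibration ((hm J).1 hmJ)
    exact ⟨J', hJ'J.trans hJI, hJ', fun haJ' => haJ (hJ'J haJ')⟩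

end IsSplittingPair

theorem IsLiftingPair.exists_lift {a b : H} (hp : IsLiftingPair f κ x y a b)
    (hκ : IsPairCollapse κ x y) (hf : IsDefinableQuotient f) :
    ∃ h, IsDefinableQuotient h ∧ κ ∘ h = f := by
  choose h κ_h a_mem b_mem using hp.exists_preimage
  have fibration : Relation.Fibration (· ≤ ·) (· ≤ ·) h := by
    intro I q hq
    by_cases hκq : κ q = κ y
    · rcases hκ.map_eq_map_iff.1 hκq with rfl | rfl
      · obtain ⟨J, hJI, hJ, ha⟩ := hp.exists_le_of_left_mem I ((a_mem I).2 hq)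
        refine ⟨J, hJI, (hκ.map_eq_map_iff.1 ((κ_h J).trans hJ)).resolve_right fun hJ => ?_⟩
        exact hκ.not_le (hJ ▸ (a_mem J).1 ha)
      · obtain ⟨J, hJI, hJ, ha⟩ := hp.exists_le_of_right_mem I ((b_mem I).2 hq)
        refine ⟨J, hJI, (hκ.map_eq_map_iff.1 ((κ_h J).trans hJ)).resolve_left fun hJ => ?_⟩
        exact ha ((a_mem J).2 hJ.ge)
    · obtain ⟨J, hJI, hJ⟩ := hf.fibration (κ_h I ▸ hκ.monotone hq)
      exact ⟨J, hJI, hκ.eq_of_map_ne hκq ((κ_h J).trans hJ)⟩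
  have defines_Ici (q : Q) : ∃ e, e ≠ ⊤ ∧ Defines h e (Ici q) := by
    by_cases hκq : κ q = κ y
    · rcases hκ.map_eq_map_iff.1 hκq with rfl | rfl
      exacts [⟨a, hp.left_ne_top, a_mem⟩, ⟨b, hp.right_ne_top, b_mem⟩]
    · obtain ⟨e, he⟩ := hf.exists_defines_Ici (κ q)
      refine ⟨e, he.ne_top hf.surjective nonempty_Ici, fun I => ?_⟩
      rw [he I, ← κ_h, mem_Ici, hκ.map_le_map_iff hκq, mem_Ici]
  have surjective : Surjective h := by
    intro q
    obtain ⟨e, he, hdef⟩ := defines_Ici q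
    obtain ⟨I, hI⟩ := LatticeSpectrum.exists_mem_of_ne_top he
    obtain ⟨J, -, hJ⟩ := fibration ((hdef I).1 hI)
    exact ⟨J, hJ⟩
  exact ⟨h, .of_fibration fibration surjective fun q => (defines_Ici q).imp fun _ he => he.2,
    funext κ_h⟩

theorem exists_isLiftingPair [Finite R] (hD : HasDensity H) (hS : HasSplitting H)
    (hκ : IsPairCollapse κ x y) (hf : IsDefinableQuotient f) :
    ∃ a b, IsLiftingPair f κ x y a b := by
  obtain ⟨m, hm⟩ := hf.exists_defines (isUpperSet_Ici (κ y))
  obtain ⟨m', hm'⟩ := hf.exists_defines (isUpperSet_Ioi (κ y))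
  obtain ⟨c, hc⟩ := hf.exists_defines (hκ.isUpperSet_kernImage (isUpperSet_Ici x))
  obtain ⟨d, hd⟩ := hf.exists_defines (hκ.isUpperSet_kernImage (isUpperSet_Ici y))
  have hm'm : StrongOrd m' m := hf.strongOrd hm hm'
  have hm_top : m ≠ ⊤ := hm.ne_top hf.surjective nonempty_Ici
  by_cases hyx : y ≤ x
  · obtain rfl : d = m := hd.unique (hκ.kernImage_Ici_right_eq_Ici hyx ▸ hm)
    obtain ⟨a, ha⟩ := hS.exists_isSplittingPair_self hD hm'm hm_top
      (hm'.le hc hκ.kernImage_Ici_left_subset)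
    exact ⟨a, d, ha.isLiftingPair hκ hf.toIsPMorphism hm hm' hc hd⟩
  · obtain rfl : c ⊓ d = m' := (hc.inf hd).unique (hκ.kernImage_union_eq_Ioi hyx ▸ hm')
    obtain ⟨a, b, hab⟩ := hS.exists_isSplittingPair hm'm hm_top
    exact ⟨a, b, hab.isLiftingPair hκ hf.toIsPMorphism hm hm' hc hd⟩

end LiftingPair

/-! ### Lifting through surjective p-morphisms and embedding finite extensions -/

/-- A bijective p-morphism as an order isomorphism. -/
noncomputable def IsPMorphism.orderIso {Q P : Type*} [PartialOrder Q] [Preorder P] {π : Q → P}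
    (hπ : IsPMorphism π) (hbij : Bijective π) : Q ≃o P where
  toEquiv := Equiv.ofBijective π hbij
  map_rel_iff' {q r} := by
    refine ⟨fun h => ?_, fun h => hπ.monotone h⟩
    obtain ⟨q', hq'r, hq'⟩ := hπ.fibration h
    exact hbij.injective hq' ▸ hq'r

section Embedding

variable {H : Type*} [HeytingAlgebra H]

theorem IsDefinableQuotient.exists_lift (hD : HasDensity H) (hS : HasSplitting H) {P : Type*}
    [Preorder P] {f : LatticeSpectrum H → P} (hf : IsDefinableQuotient f) {Q : Type u}
    [PartialOrder Q] [Finite Q] {π : Q → P} (hπ : IsPMorphism π) (hsurj : Surjective π) :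
    ∃ h, IsDefinableQuotient h ∧ π ∘ h = f := by
  induction hn : Nat.card Q using Nat.strong_induction_on generalizing Q with
  | _ n ih =>
    by_cases hinj : Injective π
    · let e := hπ.orderIso ⟨hinj, hsurj⟩
      exact ⟨_, hf.orderIso_comp e.symm, funext fun I => e.apply_symm_apply (f I)⟩
    · obtain ⟨R, _, κ, x, y, ρ, _, hκ, hρ, rfl⟩ := hπ.exists_isPairCollapse_comp_eq hinj
      have κ_not_injective : ¬ Injective κ := fun h => hκ.not_le (h hκ.map_eq).le
      have card_lt : Nat.card R < n := by
        refine hn ▸ (Nat.card_le_card_of_surjective κ hκ.surjective).lt_of_ne' fun h => ?_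
        exact κ_not_injective
          ((Nat.bijective_iff_surjective_and_card κ).2 ⟨hκ.surjective, h⟩).injective
      obtain ⟨g, hg, rfl⟩ := ih _ card_lt hρ hsurj.of_comp rfl
      obtain ⟨a, b, hab⟩ := exists_isLiftingPair hD hS hκ hg
      obtain ⟨h, hh, rfl⟩ := hab.exists_lift hκ hg
      exact ⟨h, hh, rfl⟩

theorem exists_heytingHom_comp_eq (hD : HasDensity H) (hS : HasSplitting H) {A D : Type*}
    [HeytingAlgebra A] [Finite A] [HeytingAlgebra D] [Finite D] {i : HeytingHom A H}
    (hi : Injective i) {j : HeytingHom A D} (hj : Injective j) :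
    ∃ φ : HeytingHom D H, Injective φ ∧ φ ∘ j = i := by
  obtain ⟨h, hh, hcomp⟩ := (isDefinableQuotient_comap hi).exists_lift hD hS
    (LatticeSpectrum.isPMorphism_comap j) (LatticeSpectrum.comap_surjective hj)
  obtain ⟨φ, hφ, rfl⟩ := hh.exists_comap_eq
  refine ⟨φ, hφ, funext fun a => ?_⟩
  have mem_iff (I : LatticeSpectrum H) : φ (j a) ∈ I.1 ↔ i a ∈ I.1 :=
    SetLike.ext_iff.1 (congrArg Subtype.val (congrFun hcomp I)) a
  exact le_antisymm (LatticeSpectrum.le_iff.2 fun I => (mem_iff I).2)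
    (LatticeSpectrum.le_iff.2 fun I => (mem_iff I).1)

theorem LocallyFiniteHA.isExtClosed (hlf : LocallyFiniteHA H) (hD : HasDensity H)
    (hS : HasSplitting H) : IsExtClosed.{_, v} H := by
  intro K _ f hf l m κ t s a ⟨b, hb⟩
  obtain ⟨A, _, i, _, hi, ha⟩ := hlf.exists_finite_heytingHom_subset_range (finite_range a)
  obtain ⟨a', rfl⟩ := range_subset_range_iff_exists_comp.1 ha
  let w := Fin.append (f ∘ i ∘ a') b
  have values_finite : (range (f.comp i) ∪ range b ∪
      (t.himpValues w ∪ ⋃ k, (s k).himpValues w)).Finite :=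
    ((finite_range _).union (finite_range b)).union
      ((t.finite_himpValues w).union (finite_iUnion fun k => (s k).finite_himpValues w))
  obtain ⟨D, _, ι, _, hι, values_subset⟩ :=
    exists_finite_boundedLatticeHom_subset_range values_finite
  simp only [union_subset_iff, iUnion_subset_iff] at values_subset
  obtain ⟨⟨hfi, hb_range⟩, ht, hs⟩ := values_subset
  obtain ⟨j, hj⟩ := exists_heytingHom_lift hι hfi
  obtain ⟨b', rfl⟩ := range_subset_range_iff_exists_comp.1 hb_range
  have params_eq : f ∘ i ∘ a' = ι ∘ j ∘ a' := (congrArg (· ∘ a') hj).symm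
  have solution_D : HasSolution t s (j ∘ a') := by
    simp only [w, params_eq] at ht hs
    exact ⟨b', .of_comp hι ht hs (params_eq ▸ hb)⟩
  have j_injective : Injective j := Injective.of_comp (f := ι) (hj ▸ hf.comp hi)
  obtain ⟨φ, hφ, hφj⟩ := exists_heytingHom_comp_eq hD hS hi j_injective
  rw [← hφj]
  exact solution_D.map hφ

end Embedding

/-! ### Existentially closed algebras have Density and Splitting -/

theorem lowerSet_himp_eq_iff {Y : Type*} [Preorder Y] {U V W : LowerSet Y} :
    U ⇨ V = W ↔ ∀ y, y ∉ W ↔ ∃ z ≤ y, z ∈ U ∧ z ∉ V := by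
  rw [SetLike.ext_iff]
  refine forall_congr' fun y => ?_
  have exists_iff : (∃ z ≤ y, z ∈ U ∧ z ∉ V) ↔ ¬ ∀ z ≤ y, z ∈ U → z ∈ V := by
    push Not
    rfl
  rw [mem_lowerSet_himp, exists_iff, not_iff_not]
  exact iff_comm

theorem lowerSet_strongOrd_iff {Y : Type*} [Preorder Y] {U V : LowerSet Y} :
    StrongOrd V U ↔ (∀ y ∉ U, ∃ z ≤ y, z ∈ V ∧ z ∉ U) ∧ U ≤ V := by
  rw [StrongOrd, lowerSet_himp_eq_iff]
  refine and_congr_left' (forall_congr' fun y => ⟨Iff.mp, fun h => ⟨h, ?_⟩⟩)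
  rintro ⟨z, hzy, -, hzU⟩ hyU
  exact hzU (U.lower hzy hyU)

theorem IsExtClosed.hasSolution_of_isPMorphism {H : Type u} [HeytingAlgebra H]
    (hE : IsExtClosed.{u, v} H) {Y : Type*} [Preorder Y] [Small.{v} Y] {p : Y → LatticeSpectrum H}
    (hp : IsPMorphism p) (hsurj : Surjective p) {l m κ : ℕ} {t : HeytingTerm (l + m)}
    {s : Fin κ → HeytingTerm (l + m)} {a : Fin l → H} (h : HasSolution t s (hp.extension ∘ a)) :
    HasSolution t s a := by
  let e : LowerSet Y ≃o LowerSet (Shrink.{v} Y) := LowerSet.map (orderIsoShrink Y)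
  let ε : HeytingHom (LowerSet Y) (LowerSet (Shrink.{v} Y)) := e
  exact hE _ (ε.comp hp.extension) (e.injective.comp (hp.extension_injective hsurj)) t s a
    (h.map (φ := ε) e.injective)

section Density

/-- The term expressing `c ≫ b` and `b ≫ a`, with variables ordered as `a, c, b`. -/
def densityTerm : HeytingTerm (2 + 1) :=
  .inf (.inf (.eqv (.himp (.var 1) (.var 2)) (.var 2)) (.himp (.var 2) (.var 1)))
    (.inf (.eqv (.himp (.var 2) (.var 0)) (.var 0)) (.himp (.var 0) (.var 2)))

variable {H : Type u} [HeytingAlgebra H] {a c : H}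

theorem isSolution_densityTerm_iff {v : Fin 2 → H} {w : Fin 1 → H} :
    IsSolution densityTerm (fun _ : Fin 1 => .var 2) v w ↔
      w 0 ≠ ⊤ ∧ StrongOrd (v 1) (w 0) ∧ StrongOrd (w 0) (v 0) := by
  simp only [IsSolution, densityTerm, HeytingTerm.eval, inf_eq_top_iff,
    HeytingTerm.eval_eqv_eq_top, himp_eq_top_iff, StrongOrd, forall_const]
  exact and_comm

/-- The frame over the spectrum of `H` in which Density holds between `a` and `c`: a point is tagged
by the truth value of the assertion that the new element `b` fails there, and `b` must fail where
`c` does and only where `a` does. -/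
abbrev DensityFrame (a c : H) : Type u :=
  {y : LatticeSpectrum H × Prop // (c ∈ y.1.1 → y.2) ∧ (y.2 → a ∈ y.1.1)}

namespace DensityFrame

theorem isPMorphism_fst (hac : a ≤ c) : IsPMorphism fun y : DensityFrame a c => y.1.1 where
  monotone _ _ h := h.1
  fibration y J hJ := ⟨⟨(J, c ∈ J.1), id, J.1.lower hac⟩, ⟨hJ, fun hc => y.2.1 (hJ hc)⟩, rfl⟩

theorem surjective_fst (hac : a ≤ c) : Surjective fun y : DensityFrame a c => y.1.1 :=
  fun I => ⟨⟨(I, c ∈ I.1), id, I.1.lower hac⟩, rfl⟩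

/-- The element `b` with `c ≫ b ≫ a`. -/
def interpolant : LowerSet (DensityFrame a c) := ⟨{y | ¬ y.1.2}, fun _ _ h hy hz => hy (h.2 hz)⟩

theorem interpolant_ne_top (ha : a ≠ ⊤) : (interpolant : LowerSet (DensityFrame a c)) ≠ ⊤ := by
  obtain ⟨I, hI⟩ := LatticeSpectrum.exists_mem_of_ne_top ha
  intro h
  have mem : (⟨(I, True), fun _ => trivial, fun _ => hI⟩ : DensityFrame a c) ∈ interpolant :=
    h ▸ LowerSet.mem_top
  exact mem trivial

theorem strongOrd_interpolant (hca : StrongOrd c a) :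
    StrongOrd ((isPMorphism_fst hca.2).extension c) interpolant := by
  refine lowerSet_strongOrd_iff.2 ⟨fun y hy => ?_, fun y hy hc => hy (y.2.1 hc)⟩
  have hy : y.1.2 := not_not.1 hy
  obtain ⟨J, hJ, hcJ, haJ⟩ := (LatticeSpectrum.strongOrd_iff.1 hca).1 y.1.1 (y.2.2 hy)
  exact ⟨⟨(J, True), fun _ => trivial, fun _ => haJ⟩, ⟨hJ, fun _ => hy⟩, hcJ, fun h => h trivial⟩

theorem interpolant_strongOrd (hca : StrongOrd c a) :
    StrongOrd interpolant ((isPMorphism_fst hca.2).extension a) := by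
  refine lowerSet_strongOrd_iff.2 ⟨fun y hy => ?_, fun y ha hy => ha (y.2.2 hy)⟩
  obtain ⟨J, hJ, hcJ, haJ⟩ := (LatticeSpectrum.strongOrd_iff.1 hca).1 y.1.1 (not_not.1 hy)
  exact ⟨⟨(J, False), hcJ, False.elim⟩, ⟨hJ, False.elim⟩, id, fun h => h haJ⟩

end DensityFrame

theorem IsExtClosed.hasDensity [Small.{v} H] (hE : IsExtClosed.{u, v} H) : HasDensity H := by
  intro a c hca ha
  obtain ⟨b, hb⟩ := hE.hasSolution_of_isPMorphism (DensityFrame.isPMorphism_fst hca.2)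
    (DensityFrame.surjective_fst hca.2) (a := ![a, c]) ⟨![DensityFrame.interpolant],
      isSolution_densityTerm_iff.2 ⟨DensityFrame.interpolant_ne_top ha,
        DensityFrame.strongOrd_interpolant hca, DensityFrame.interpolant_strongOrd hca⟩⟩
  exact ⟨b 0, isSolution_densityTerm_iff.1 hb⟩

end Density

section Splitting

/-- The term expressing the equations and inequalities of the Splitting property, with variables
ordered as `a, b₁, b₂, a₁, a₂`. -/
def splittingTerm : HeytingTerm (3 + 2) :=
  .inf (.eqv (.himp (.var 4) (.var 0)) (.var 3))
    (.inf (.eqv (.himp (.var 3) (.var 0)) (.var 4))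
      (.inf (.himp (.var 3) (.var 1))
        (.inf (.himp (.var 4) (.var 2))
          (.eqv (.sup (.var 3) (.var 4)) (.sup (.var 1) (.var 2))))))

variable {H : Type u} [HeytingAlgebra H] {a b₁ b₂ : H}

theorem isSolution_splittingTerm_iff {v : Fin 3 → H} {w : Fin 2 → H} :
    IsSolution splittingTerm ![.var 3, .var 4] v w ↔
      w 0 ≠ ⊤ ∧ w 1 ≠ ⊤ ∧ w 1 ⇨ v 0 = w 0 ∧ w 0 ⇨ v 0 = w 1 ∧ w 0 ≤ v 1 ∧ w 1 ≤ v 2 ∧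
        w 0 ⊔ w 1 = v 1 ⊔ v 2 := by
  simp only [IsSolution, splittingTerm, HeytingTerm.eval, inf_eq_top_iff,
    HeytingTerm.eval_eqv_eq_top, himp_eq_top_iff, Fin.forall_fin_two]
  exact and_comm.trans and_assoc

/-- The frame over the spectrum of `H` in which `a` splits below `b₁` and `b₂`: the two tags of a
point are the truth values of the assertions that the new elements `a₁` and `a₂` fail there. -/
abbrev SplittingFrame (a b₁ b₂ : H) : Type u :=
  {y : LatticeSpectrum H × Prop × Prop // (a ∈ y.1.1 ↔ y.2.1 ∨ y.2.2) ∧ (b₁ ∈ y.1.1 → y.2.1) ∧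
    (b₂ ∈ y.1.1 → y.2.2) ∧ (y.2.1 ∧ y.2.2 → b₁ ∈ y.1.1 ∧ b₂ ∈ y.1.1)}

namespace SplittingFrame

theorem isPMorphism_fst (hab₁ : a ≤ b₁) (hab₂ : a ≤ b₂) :
    IsPMorphism fun y : SplittingFrame a b₁ b₂ => y.1.1 where
  monotone _ _ h := h.1
  fibration := by
    rintro ⟨⟨I, L, R⟩, ha, h₁, h₂, h₁₂⟩ J hJ
    refine ⟨⟨(J, a ∈ J.1 ∧ (b₁ ∈ J.1 ∨ b₂ ∉ J.1 ∧ L), a ∈ J.1 ∧ (b₂ ∈ J.1 ∨ b₁ ∉ J.1 ∧ ¬ L)),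
      ?_, ?_, ?_, ?_⟩, ⟨hJ, ?_, ?_⟩, rfl⟩
    · tauto
    · exact fun hb => ⟨J.1.lower hab₁ hb, .inl hb⟩
    · exact fun hb => ⟨J.1.lower hab₂ hb, .inl hb⟩
    · tauto
    · exact fun h => h.2.elim (fun hb => h₁ (hJ hb)) And.right
    · exact fun h => h.2.elim (fun hb => h₂ (hJ hb)) fun hL => (ha.1 (hJ h.1)).resolve_left hL.2

theorem surjective_fst (hab₁ : a ≤ b₁) (hab₂ : a ≤ b₂) :
    Surjective fun y : SplittingFrame a b₁ b₂ => y.1.1 := by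
  intro I
  have ha₁ : b₁ ∈ I.1 → a ∈ I.1 := I.1.lower hab₁
  have ha₂ : b₂ ∈ I.1 → a ∈ I.1 := I.1.lower hab₂
  exact ⟨⟨(I, a ∈ I.1 ∧ (b₁ ∈ I.1 ∨ b₂ ∉ I.1), b₂ ∈ I.1), by tauto⟩, rfl⟩

/-- The element `a₁` of the Splitting property. -/
def left : LowerSet (SplittingFrame a b₁ b₂) := ⟨{y | ¬ y.1.2.1}, fun _ _ h hy hz => hy (h.2.1 hz)⟩

/-- The element `a₂` of the Splitting property. -/
def right : LowerSet (SplittingFrame a b₁ b₂) := ⟨{y | ¬ y.1.2.2}, fun _ _ h hy hz => hy (h.2.2 hz)⟩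

theorem exists_le_coe_eq (hb : StrongOrd (b₁ ⊓ b₂) a) {I : LatticeSpectrum H} (ha : a ∈ I.1) :
    ∃ J ≤ I, a ∈ J.1 ∧ ∃ y z : SplittingFrame a b₁ b₂,
      y.1 = (J, True, False) ∧ z.1 = (J, False, True) := by
  obtain ⟨J, hJ, hbJ, haJ⟩ := (LatticeSpectrum.strongOrd_iff.1 hb).1 I ha
  obtain ⟨hb₁, hb₂⟩ := not_or.1 (LatticeSpectrum.inf_mem_iff.not.1 hbJ)
  exact ⟨J, hJ, haJ, ⟨(J, True, False), by tauto⟩, ⟨(J, False, True), by tauto⟩, rfl, rfl⟩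

theorem left_ne_top (hb : StrongOrd (b₁ ⊓ b₂) a) (ha : a ≠ ⊤) :
    (left : LowerSet (SplittingFrame a b₁ b₂)) ≠ ⊤ := by
  obtain ⟨I, hI⟩ := LatticeSpectrum.exists_mem_of_ne_top ha
  obtain ⟨J, -, -, y, -, hy, -⟩ := exists_le_coe_eq hb hI
  intro h
  have mem : y ∈ left := h ▸ LowerSet.mem_top
  exact mem (by simp [hy])

theorem right_ne_top (hb : StrongOrd (b₁ ⊓ b₂) a) (ha : a ≠ ⊤) :
    (right : LowerSet (SplittingFrame a b₁ b₂)) ≠ ⊤ := by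
  obtain ⟨I, hI⟩ := LatticeSpectrum.exists_mem_of_ne_top ha
  obtain ⟨J, -, -, -, z, -, hz⟩ := exists_le_coe_eq hb hI
  intro h
  have mem : z ∈ right := h ▸ LowerSet.mem_top
  exact mem (by simp [hz])

theorem right_himp_extension (hb : StrongOrd (b₁ ⊓ b₂) a)
    (hp : IsPMorphism fun y : SplittingFrame a b₁ b₂ => y.1.1) :
    right ⇨ hp.extension a = left := by
  refine lowerSet_himp_eq_iff.2 fun y => ⟨fun hy => ?_, ?_⟩
  · have hy : y.1.2.1 := not_not.1 hy
    obtain ⟨J, hJ, haJ, x, -, hx, -⟩ := exists_le_coe_eq hb (y.2.1.2 (.inl hy))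
    refine ⟨x, ?_, fun h => ?_, fun h => h ?_⟩
    · exact Subtype.coe_le_coe.1 (hx ▸ ⟨hJ, fun _ => hy, False.elim⟩)
    · simp [hx] at h
    · simpa [hx] using haJ
  · rintro ⟨z, hzy, hzR, hza⟩ hy
    exact hy (hzy.2.1 ((z.2.1.1 (not_not.1 hza)).resolve_right hzR))

theorem left_himp_extension (hb : StrongOrd (b₁ ⊓ b₂) a)
    (hp : IsPMorphism fun y : SplittingFrame a b₁ b₂ => y.1.1) :
    left ⇨ hp.extension a = right := by
  refine lowerSet_himp_eq_iff.2 fun y => ⟨fun hy => ?_, ?_⟩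
  · have hy : y.1.2.2 := not_not.1 hy
    obtain ⟨J, hJ, haJ, -, x, -, hx⟩ := exists_le_coe_eq hb (y.2.1.2 (.inr hy))
    refine ⟨x, ?_, fun h => ?_, fun h => h ?_⟩
    · exact Subtype.coe_le_coe.1 (hx ▸ ⟨hJ, False.elim, fun _ => hy⟩)
    · simp [hx] at h
    · simpa [hx] using haJ
  · rintro ⟨z, hzy, hzL, hza⟩ hy
    exact hy (hzy.2.2 ((z.2.1.1 (not_not.1 hza)).resolve_left hzL))

theorem left_le (hp : IsPMorphism fun y : SplittingFrame a b₁ b₂ => y.1.1) :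
    left ≤ hp.extension b₁ :=
  fun y hy hb => hy (y.2.2.1 hb)

theorem right_le (hp : IsPMorphism fun y : SplittingFrame a b₁ b₂ => y.1.1) :
    right ≤ hp.extension b₂ :=
  fun y hy hb => hy (y.2.2.2.1 hb)

theorem left_sup_right (hp : IsPMorphism fun y : SplittingFrame a b₁ b₂ => y.1.1) :
    left ⊔ right = hp.extension b₁ ⊔ hp.extension b₂ := by
  refine le_antisymm (sup_le_sup (left_le hp) (right_le hp)) fun y hy => ?_
  exact not_and_or.1 fun h => not_and_or.2 hy (y.2.2.2.2 h)

end SplittingFrame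

theorem IsExtClosed.hasSplitting [Small.{v} H] (hE : IsExtClosed.{u, v} H) : HasSplitting H := by
  intro a b₁ b₂ hb ha
  have hab₁ : a ≤ b₁ := hb.2.trans inf_le_left
  have hab₂ : a ≤ b₂ := hb.2.trans inf_le_right
  have hp := SplittingFrame.isPMorphism_fst hab₁ hab₂
  obtain ⟨w, hw⟩ := hE.hasSolution_of_isPMorphism hp (SplittingFrame.surjective_fst hab₁ hab₂)
    (a := ![a, b₁, b₂]) ⟨![SplittingFrame.left, SplittingFrame.right],
      isSolution_splittingTerm_iff.2 ⟨SplittingFrame.left_ne_top hb ha,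
        SplittingFrame.right_ne_top hb ha, SplittingFrame.right_himp_extension hb hp,
        SplittingFrame.left_himp_extension hb hp, SplittingFrame.left_le hp,
        SplittingFrame.right_le hp, SplittingFrame.left_sup_right hp⟩⟩
  exact ⟨w 0, w 1, isSolution_splittingTerm_iff.1 hw⟩

end Splitting

theorem countable_locallyFinite_extClosed_iff_density_splitting_general
    (H : Type u) [HeytingAlgebra H] [Small.{v} H] (hlf : LocallyFiniteHA H) :
    IsExtClosed.{u, v} H ↔ HasDensity H ∧ HasSplitting H :=
  ⟨fun hE => ⟨hE.hasDensity, hE.hasSplitting⟩, fun h => hlf.isExtClosed h.1 h.2⟩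

/-- A countable locally finite Heyting algebra is existentially closed iff it has the
Density and Splitting properties. -/
theorem countable_locallyFinite_extClosed_iff_density_splitting
    (H : Type*) [HeytingAlgebra H] [Countable H] (hlf : LocallyFiniteHA H) :
    IsExtClosed H ↔ HasDensity H ∧ HasSplitting H :=
  have := Countable.toSmall H
  countable_locallyFinite_extClosed_iff_density_splitting_general H hlf
end
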